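/- arXiv:1203.3256 — 3 statements merged into one kernel-verified Lean document; each statement's English description precedes it below -/
import Mathlib

section
/- Let I be an instance of (1-in-3)-SAT with variables X_1,...,X_n and m clauses, each clause consisting of three literals on three distinct variables, and let (G_I, C_I) be the multigraph with exact conflict pairs constructed from I as described in the context. Then I admits a truth assignment under which every clause contains exactly one true literal if and only if G_I has an even orientation that violates no exact conflict pair of C_I. -/
open scoped Classical

noncomputable section

/-- The indegree of vertex `v` under the head-assignment `o`. -/
def indeg {V E : Type*} (o : E → V) (v : V) : ℕ := Nat.card {e // o e = v}

/-- `o` is an orientation of the multigraph with incidence map `ends`: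
every edge is directed towards one of its two endpoints (its head). -/
def IsOrient {V E : Type*} (ends : E → V × V) (o : E → V) : Prop :=
  ∀ e, o e = (ends e).1 ∨ o e = (ends e).2

/-- Edge `e` is incident to vertex `v`. -/
def Inc {V E : Type*} (ends : E → V × V) (e : E) (v : V) : Prop :=
  (ends e).1 = v ∨ (ends e).2 = v

section Construction

variable (n m : ℕ)

/-- Number of pendant legs at chain vertex `x_{i,l}`: three at the two ends of the
caterpillar chain, two at interior chain vertices. -/
def legCount (l : Fin (2 * m)) : ℕ := if l.val = 0 ∨ l.val = 2 * m - 1 then 3 else 2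

/-- The edges of `G_I` other than the possible parity edge `v₀v₀'`:
chain edges of the caterpillars, legs, and the pendant edges `a_jc_j`, `b_jc_j`. -/
def EB0 : Type :=
  {q : Fin n × Fin (2 * m) // q.2.val + 1 < 2 * m} ⊕
  {q : (Fin n × Fin (2 * m)) × Fin 3 // q.2.val < legCount m q.1.2} ⊕
  Fin m ⊕ Fin m

/-- The total number of edges so far is odd, so the vertex `v₀'` and the edge `v₀v₀'`
are added. -/
def cond0 : Prop := Odd (Nat.card (EB0 n m))

/-- The edges of `G_I`. -/
def E0T : Type := EB0 n m ⊕ PLift (cond0 n m)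

/-- The vertices of `G_I`: the chain vertices `x_{i,l}`, the clause vertices `c_j`,
the pendant vertices `a_j` and `b_j`, the vertex `v₀`, and possibly `v₀'`. -/
def V0T : Type :=
  (Fin n × Fin (2 * m)) ⊕ Fin m ⊕ Fin m ⊕ Fin m ⊕ Unit ⊕ PLift (cond0 n m)

variable (clauses : Fin m → Fin 3 → Fin n × Bool)

/-- The free endpoint of the leg `(i, l, r)`: the first leg (`r = 0`) of `x_{i,l}` is
attached to the clause vertex `c_j` (`j = ⌊l/2⌋`) when clause `j` uses variable `i`
positively (if `l` is even, i.e. `l = 2j-1` in 1-indexing) or negatively (if `l` is odd);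
all remaining legs are attached to `v₀`. -/
def legTarget (i : Fin n) (l : Fin (2 * m)) (r : Fin 3) : V0T n m :=
  if r.val = 0 ∧ ∃ t : Fin 3,
      clauses ⟨l.val / 2, by have := l.isLt; omega⟩ t = (i, decide (l.val % 2 = 0)) then
    Sum.inr (Sum.inl ⟨l.val / 2, by have := l.isLt; omega⟩)
  else Sum.inr (Sum.inr (Sum.inr (Sum.inr (Sum.inl ()))))

/-- The incidence map of `G_I`. -/
def ends0 : E0T n m → V0T n m × V0T n m
  | Sum.inl (Sum.inl q) =>
      (Sum.inl q.1, Sum.inl (q.1.1, ⟨q.1.2.val + 1, q.2⟩))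
  | Sum.inl (Sum.inr (Sum.inl q)) =>
      (Sum.inl q.1.1, legTarget n m clauses q.1.1.1 q.1.1.2 q.1.2)
  | Sum.inl (Sum.inr (Sum.inr (Sum.inl j))) =>
      (Sum.inr (Sum.inr (Sum.inl j)), Sum.inr (Sum.inl j))
  | Sum.inl (Sum.inr (Sum.inr (Sum.inr j))) =>
      (Sum.inr (Sum.inr (Sum.inr (Sum.inl j))), Sum.inr (Sum.inl j))
  | Sum.inr h =>
      (Sum.inr (Sum.inr (Sum.inr (Sum.inr (Sum.inl ())))),
        Sum.inr (Sum.inr (Sum.inr (Sum.inr (Sum.inr h)))))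

/-- The family `C_I` of exact conflict pairs of `G_I`: at every chain vertex every pair of
incident edges, and at every clause vertex `c_j` the pair `{a_jc_j, b_jc_j}`. -/
def C0 : Set (Set (E0T n m) × V0T n m) :=
  {c |
    (∃ (q : Fin n × Fin (2 * m)) (e₁ e₂ : E0T n m), e₁ ≠ e₂ ∧
      Inc (ends0 n m clauses) e₁ (Sum.inl q) ∧ Inc (ends0 n m clauses) e₂ (Sum.inl q) ∧
      c = (({e₁, e₂} : Set (E0T n m)), Sum.inl q)) ∨
    (∃ j : Fin m,
      c = (({Sum.inl (Sum.inr (Sum.inr (Sum.inl j))),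
             Sum.inl (Sum.inr (Sum.inr (Sum.inr j)))} : Set (E0T n m)),
           Sum.inr (Sum.inl j)))}

end Construction

/-!
A vertex of degree four at which every pair of edges is an exact conflict can only have even
indegree by being a sink or a source. Along the chain of `X_i`, sinks and sources therefore
alternate, which leaves two states: the value of `X_i` decides whether the odd or the even chain
vertices (counted from one) are the sinks. So the leg of a literal leaves its chain vertex, towards
`c_j`, exactly when the chain vertex is a source, that is, when the literal is false.

Parity at `a_j` and `b_j` forces both of their edges into `c_j`. Evenness at `c_j` then means that
zero or two of its three legs point to it, and the conflict pair at `c_j` excludes zero, so exactly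
one literal of `C_j` is true. Conversely, an assignment prescribes the sinks and sources on the
chains; directing the pendant edges away from `a_j`, `b_j` and `v₀'` makes every indegree even
except possibly that of `v₀`, which is then even because the number of edges is.
-/

section Cardinality

theorem even_ncard_and_ne_pair_iff {α : Type*} {s t : Set α} (hst : s ⊆ t)
    (ht : t.ncard = 4) :
    (Even s.ncard ∧ ∀ a b, a ≠ b → a ∈ t → b ∈ t → s ≠ {a, b}) ↔ s = t ∨ s = ∅ := by
  have htfin : t.Finite := Set.finite_of_ncard_ne_zero (by omega)
  have hsfin : s.Finite := htfin.subset hst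
  have hpair : (∀ a b, a ≠ b → a ∈ t → b ∈ t → s ≠ {a, b}) ↔ s.ncard ≠ 2 := by
    rw [Ne, Set.ncard_eq_two]
    refine ⟨?_, fun h a b hab _ _ hs => h ⟨a, b, hab, hs⟩⟩
    rintro h ⟨a, b, hab, rfl⟩
    exact h a b hab (hst (by simp)) (hst (by simp)) rfl
  have hfull : s = t ↔ s.ncard = 4 :=
    ⟨fun h => h ▸ ht, fun h => Set.eq_of_subset_of_ncard_le hst (by omega) htfin⟩
  have hle : s.ncard ≤ 4 := ht ▸ Set.ncard_le_ncard hst htfin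
  rw [hpair, hfull, ← Set.ncard_eq_zero hsfin, Nat.even_iff]
  omega

theorem existsUnique_notMem_iff_even_and_nonempty {ι : Type*} (hι : Nat.card ι = 3)
    (s : Set ι) : (∃! t, t ∉ s) ↔ Even s.ncard ∧ s.Nonempty := by
  have : Finite ι := Nat.finite_of_card_ne_zero (by omega)
  have hcompl : s.ncard + sᶜ.ncard = 3 := hι ▸ Set.ncard_add_ncard_compl s
  have hunique : (∃! t, t ∉ s) ↔ sᶜ.ncard = 1 := by
    simp only [Set.ncard_eq_one, Set.eq_singleton_iff_unique_mem]
    rfl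
  rw [hunique, ← Set.ncard_pos, Nat.even_iff]
  omega

end Cardinality

section Multigraph

variable {V E : Type*} {ends : E → V × V} {o : E → V} {u v w : V} {e : E}

/-- The vertex `v` is the head of every edge incident to it. -/
def IsSink (ends : E → V × V) (o : E → V) (v : V) : Prop := ∀ e, Inc ends e v → o e = v

/-- The vertex `v` is the head of no edge. -/
def IsSource (o : E → V) (v : V) : Prop := ∀ e, o e ≠ v

theorem indeg_eq_ncard (o : E → V) (v : V) : indeg o v = {e | o e = v}.ncard := rfl

theorem heads_eq_empty_iff_isSource : {e | o e = v} = ∅ ↔ IsSource o v :=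
  Set.eq_empty_iff_forall_notMem

theorem IsSource.even_indeg (h : IsSource o v) : Even (indeg o v) := by
  rw [indeg_eq_ncard, heads_eq_empty_iff_isSource.2 h, Set.ncard_empty]
  exact Even.zero

theorem head_eq_iff_isSink (he : Inc ends e v) (hv : IsSink ends o v ∨ IsSource o v) :
    o e = v ↔ IsSink ends o v :=
  ⟨fun h => hv.resolve_right fun hsource => hsource e h, fun h => h e he⟩

theorem sum_indeg [Fintype V] [Finite E] (o : E → V) : ∑ v, indeg o v = Nat.card E := by
  rw [Nat.card_congr (Equiv.sigmaFiberEquiv o).symm, Nat.card_sigma]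
  rfl

theorem even_indeg_of_forall_ne [Finite V] [Finite E] (hE : Even (Nat.card E))
    (h : ∀ w, w ≠ v → Even (indeg o w)) : Even (indeg o v) := by
  have := Fintype.ofFinite V
  rw [← sum_indeg o, ← Finset.add_sum_erase _ _ (Finset.mem_univ v)] at hE
  exact (Nat.even_add.1 hE).2 (Finset.even_sum _ fun w hw => h w (Finset.ne_of_mem_erase hw))

namespace IsOrient

theorem inc (ho : IsOrient ends o) (h : o e = v) : Inc ends e v :=
  (ho e).imp (fun h' => h'.symm.trans h) (fun h' => h'.symm.trans h)

theorem heads_subset (ho : IsOrient ends o) : {e | o e = v} ⊆ {e | Inc ends e v} :=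
  fun _ => ho.inc

theorem heads_eq_incident_iff_isSink (ho : IsOrient ends o) :
    {e | o e = v} = {e | Inc ends e v} ↔ IsSink ends o v :=
  ⟨fun h _ he => h.superset he, fun h => ho.heads_subset.antisymm h⟩

theorem head_ne_snd_iff (ho : IsOrient ends o) (he : ends e = (u, w)) (huw : u ≠ w) :
    o e ≠ w ↔ o e = u := by
  have := ho e
  rw [he] at this
  exact ⟨this.resolve_right, fun h => h.trans_ne huw⟩

theorem isSink_snd_iff_not_isSink_fst (ho : IsOrient ends o) (he : ends e = (u, w))
    (huw : u ≠ w) (hu : IsSink ends o u ∨ IsSource o u) (hw : IsSink ends o w ∨ IsSource o w) :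
    IsSink ends o w ↔ ¬ IsSink ends o u := by
  rw [← head_eq_iff_isSink (e := e) (by simp [Inc, he]) hu,
    ← head_eq_iff_isSink (e := e) (by simp [Inc, he]) hw, ← ho.head_ne_snd_iff he huw, not_not]

theorem even_indeg_iff_isSource (ho : IsOrient ends o) (hv : {e | Inc ends e v}.Subsingleton) :
    Even (indeg o v) ↔ IsSource o v := by
  refine ⟨fun heven => heads_eq_empty_iff_isSource.1 ?_, IsSource.even_indeg⟩
  refine (hv.anti ho.heads_subset).eq_empty_or_singleton.resolve_right ?_
  rintro ⟨e, he⟩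
  simp [indeg_eq_ncard, he] at heven

theorem even_indeg_and_ne_pair_iff (ho : IsOrient ends o) (hv : {e | Inc ends e v}.ncard = 4) :
    (Even (indeg o v) ∧ ∀ e₁ e₂, e₁ ≠ e₂ → Inc ends e₁ v → Inc ends e₂ v →
        {e | o e = v} ≠ {e₁, e₂}) ↔ IsSink ends o v ∨ IsSource o v := by
  rw [← ho.heads_eq_incident_iff_isSink, ← heads_eq_empty_iff_isSource]
  exact even_ncard_and_ne_pair_iff ho.heads_subset hv

theorem even_indeg_and_ne_pair_iff_existsUnique {ι : Type*} (hι : Nat.card ι = 3) {a b : E}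
    {f : ι → E} (ho : IsOrient ends o) (hab : a ≠ b) (hf : Function.Injective f)
    (hfab : ∀ t, f t ∉ ({a, b} : Set E)) (hv : {e | Inc ends e v} ⊆ {a, b} ∪ Set.range f)
    (ha : o a = v) (hb : o b = v) :
    (Even (indeg o v) ∧ {e | o e = v} ≠ {a, b}) ↔ ∃! t, o (f t) ≠ v := by
  have : Finite ι := Nat.finite_of_card_ne_zero (by omega)
  set s : Set ι := {t | o (f t) = v}
  have hheads : {e | o e = v} = {a, b} ∪ f '' s := by
    refine Set.Subset.antisymm (fun e he => ?_) ?_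
    · rcases hv (ho.inc he) with h | ⟨t, rfl⟩
      exacts [Or.inl h, Or.inr ⟨t, he, rfl⟩]
    · rintro e ((rfl | rfl) | ⟨t, ht, rfl⟩)
      exacts [ha, hb, ht]
  have hdisj : Disjoint {a, b} (f '' s) := by
    rw [Set.disjoint_right]
    rintro _ ⟨t, -, rfl⟩
    exact hfab t
  have hcard : indeg o v = 2 + s.ncard := by
    rw [indeg_eq_ncard, hheads, Set.ncard_union_eq hdisj, Set.ncard_pair hab,
      Set.ncard_image_of_injective _ hf]
  have hpair : {e | o e = v} ≠ {a, b} ↔ s.Nonempty := by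
    rw [hheads, Ne, Set.union_eq_left, ← Set.image_nonempty (f := f), Set.nonempty_iff_ne_empty]
    exact not_congr ⟨hdisj.symm.eq_bot_of_le, fun h => h ▸ Set.empty_subset _⟩
  rw [hcard, hpair, Nat.even_add, iff_true_left even_two]
  exact (existsUnique_notMem_iff_even_and_nonempty hι s).symm

end IsOrient

/-- The orientation that directs every edge towards its first endpoint if this lies in `T`, and
towards its second endpoint otherwise. -/
def orientInto (T : Set V) (ends : E → V × V) (e : E) : V :=
  if (ends e).1 ∈ T then (ends e).1 else (ends e).2

theorem isOrient_orientInto (T : Set V) (ends : E → V × V) :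
    IsOrient ends (orientInto T ends) := fun e => by
  unfold orientInto
  split_ifs
  exacts [Or.inl rfl, Or.inr rfl]

variable {T : Set V}

theorem isSink_orientInto (hv : v ∈ T) (h : ∀ e, (ends e).2 = v → (ends e).1 ∉ T) :
    IsSink ends (orientInto T ends) v := by
  rintro e (rfl | he)
  · exact if_pos hv
  · exact (if_neg (h e he)).trans he

theorem isSource_orientInto (hv : v ∉ T) (h : ∀ e, (ends e).2 = v → (ends e).1 ∈ T) :
    IsSource (orientInto T ends) v := by
  intro e he
  unfold orientInto at he
  split_ifs at he with hT
  · exact hv (he ▸ hT)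
  · exact hT (h e he)

end Multigraph

section Incidence

variable {n m : ℕ}

instance : Finite (EB0 n m) := by unfold EB0; infer_instance

instance : Finite (E0T n m) := by unfold E0T; infer_instance

instance : Finite (V0T n m) := by unfold V0T; infer_instance

theorem even_card_E0T (n m : ℕ) : Even (Nat.card (E0T n m)) := by
  have hcard : Nat.card (E0T n m) = Nat.card (EB0 n m) + Nat.card (PLift (cond0 n m)) :=
    Nat.card_sum
  rw [hcard]
  by_cases h : cond0 n m
  · have : Unique (PLift (cond0 n m)) := ⟨⟨⟨h⟩⟩, fun _ => rfl⟩
    rw [Nat.card_unique (α := PLift _)]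
    exact h.add_one
  · have : IsEmpty (PLift (cond0 n m)) := ⟨fun x => h x.down⟩
    rw [Nat.card_of_isEmpty (α := PLift _), add_zero]
    exact Nat.not_odd_iff_even.1 h

/-- The positions `(i, l)` of the chain vertices `x_{i,l}`, where `l` counts from `0`. -/
abbrev ChainPos (n m : ℕ) : Type := Fin n × Fin (2 * m)

/-- The chain edges, indexed by the position of their first endpoint. -/
abbrev ChainLink (n m : ℕ) : Type := {q : ChainPos n m // q.2.val + 1 < 2 * m}

/-- The position of the second endpoint of a chain edge. -/
def ChainLink.next (c : ChainLink n m) : ChainPos n m := (c.1.1, ⟨c.1.2.val + 1, c.2⟩)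

/-- The legs, each given by its position and its number among the legs there. -/
abbrev Leg (n m : ℕ) : Type := {p : ChainPos n m × Fin 3 // p.2.val < legCount m p.1.2}

/-- The chain vertex `x_{i,l}`. -/
abbrev chainVertex (q : ChainPos n m) : V0T n m := Sum.inl q

/-- The clause vertex `c_j`. -/
abbrev clauseVertex (j : Fin m) : V0T n m := Sum.inr (Sum.inl j)

/-- The pendant vertex `a_j`. -/
abbrev pendantA (j : Fin m) : V0T n m := Sum.inr (Sum.inr (Sum.inl j))

/-- The pendant vertex `b_j`. -/
abbrev pendantB (j : Fin m) : V0T n m := Sum.inr (Sum.inr (Sum.inr (Sum.inl j)))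

/-- The vertex `v₀`. -/
abbrev baseVertex : V0T n m := Sum.inr (Sum.inr (Sum.inr (Sum.inr (Sum.inl ()))))

/-- The vertex `v₀'`. -/
abbrev parityVertex (h : PLift (cond0 n m)) : V0T n m :=
  Sum.inr (Sum.inr (Sum.inr (Sum.inr (Sum.inr h))))

/-- The chain edge from `c.1` to `c.next`. -/
abbrev chainEdge (c : ChainLink n m) : E0T n m := Sum.inl (Sum.inl c)

/-- A leg as an edge of `G_I`. -/
abbrev legEdge (l : Leg n m) : E0T n m := Sum.inl (Sum.inr (Sum.inl l))

/-- The edge `a_jc_j`. -/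
abbrev edgeA (j : Fin m) : E0T n m := Sum.inl (Sum.inr (Sum.inr (Sum.inl j)))

/-- The edge `b_jc_j`. -/
abbrev edgeB (j : Fin m) : E0T n m := Sum.inl (Sum.inr (Sum.inr (Sum.inr j)))

/-- The edge `v₀v₀'`. -/
abbrev parityEdge (h : PLift (cond0 n m)) : E0T n m := Sum.inr h

@[elab_as_elim] theorem edge_cases {P : E0T n m → Prop} (chain : ∀ c, P (chainEdge c))
    (leg : ∀ l, P (legEdge l)) (a : ∀ j, P (edgeA j)) (b : ∀ j, P (edgeB j))
    (parity : ∀ h, P (parityEdge h)) : ∀ e, P e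
  | Sum.inl (Sum.inl c) => chain c
  | Sum.inl (Sum.inr (Sum.inl l)) => leg l
  | Sum.inl (Sum.inr (Sum.inr (Sum.inl j))) => a j
  | Sum.inl (Sum.inr (Sum.inr (Sum.inr j))) => b j
  | Sum.inr h => parity h

variable (n m) in
/-- The vertices `a_j`, `b_j` and `v₀'`, which have degree one. -/
def pendants : Set (V0T n m) :=
  Set.range pendantA ∪ Set.range pendantB ∪ Set.range parityVertex

theorem pendantA_mem_pendants (j : Fin m) : pendantA j ∈ pendants n m := Or.inl (Or.inl ⟨j, rfl⟩)

theorem pendantB_mem_pendants (j : Fin m) : pendantB j ∈ pendants n m := Or.inl (Or.inr ⟨j, rfl⟩)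

theorem parityVertex_mem_pendants (h : PLift (cond0 n m)) : parityVertex h ∈ pendants n m :=
  Or.inr ⟨h, rfl⟩

@[elab_as_elim] theorem vertex_cases {P : V0T n m → Prop} (chain : ∀ q, P (chainVertex q))
    (clause : ∀ j, P (clauseVertex j)) (pendant : ∀ v ∈ pendants n m, P v)
    (base : P baseVertex) : ∀ v, P v
  | Sum.inl q => chain q
  | Sum.inr (Sum.inl j) => clause j
  | Sum.inr (Sum.inr (Sum.inl j)) => pendant _ (pendantA_mem_pendants j)
  | Sum.inr (Sum.inr (Sum.inr (Sum.inl j))) => pendant _ (pendantB_mem_pendants j)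
  | Sum.inr (Sum.inr (Sum.inr (Sum.inr (Sum.inl ())))) => base
  | Sum.inr (Sum.inr (Sum.inr (Sum.inr (Sum.inr h)))) => pendant _ (parityVertex_mem_pendants h)

theorem chainVertex_injective : Function.Injective (chainVertex (n := n) (m := m)) :=
  Sum.inl_injective

theorem clauseVertex_injective : Function.Injective (clauseVertex (n := n) (m := m)) :=
  Sum.inr_injective.comp Sum.inl_injective

theorem chainEdge_injective : Function.Injective (chainEdge (n := n) (m := m)) :=
  Sum.inl_injective.comp Sum.inl_injective

theorem legEdge_injective : Function.Injective (legEdge (n := n) (m := m)) :=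
  Sum.inl_injective.comp (Sum.inr_injective.comp Sum.inl_injective)

/-- The position of the chain vertex whose first leg is reserved for the literal `x` in clause
`j`. -/
def literalPos (j : Fin m) (x : Fin n × Bool) : ChainPos n m :=
  (x.1, ⟨2 * j.val + if x.2 then 0 else 1, by split_ifs <;> omega⟩)

theorem literalPos_eq_iff {j : Fin m} {x : Fin n × Bool} {q : ChainPos n m} :
    literalPos j x = q ↔ q.2.val / 2 = j.val ∧ x = (q.1, decide (q.2.val % 2 = 0)) := by
  obtain ⟨i, b⟩ := x
  simp only [literalPos, Prod.ext_iff, Fin.ext_iff]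
  cases b <;> grind

theorem literalPos_injective (j : Fin m) : Function.Injective (literalPos (n := n) j) :=
  fun _ _ h => (literalPos_eq_iff.1 h).2.trans (literalPos_eq_iff.1 rfl).2.symm

/-- The leg reserved for the literal `x` in clause `j`. -/
def literalLeg (j : Fin m) (x : Fin n × Bool) : Leg n m :=
  ⟨(literalPos j x, 0), by simp only [legCount]; split_ifs <;> simp⟩

theorem literalLeg_injective (j : Fin m) : Function.Injective (literalLeg (n := n) j) :=
  fun _ _ h => literalPos_injective j (congrArg (fun l : Leg n m => l.1.1) h)

variable (clauses : Fin m → Fin 3 → Fin n × Bool)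

theorem legTarget_eq_clauseVertex_or_baseVertex (l : Leg n m) :
    (∃ j, legTarget n m clauses l.1.1.1 l.1.1.2 l.1.2 = clauseVertex j) ∨
      legTarget n m clauses l.1.1.1 l.1.1.2 l.1.2 = baseVertex :=
  (ite_eq_or_eq _ _ _).imp_left fun h => ⟨_, h⟩

variable {clauses}

theorem legTarget_eq_clauseVertex_iff {l : Leg n m} {j : Fin m} :
    legTarget n m clauses l.1.1.1 l.1.1.2 l.1.2 = clauseVertex j ↔
      ∃ t, l = literalLeg j (clauses j t) := by
  have hleg : ∀ x, l = literalLeg j x ↔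
      l.1.2 = 0 ∧ l.1.1.2.val / 2 = j.val ∧ x = (l.1.1.1, decide (l.1.1.2.val % 2 = 0)) := by
    intro x
    rw [← literalPos_eq_iff, Subtype.ext_iff, Prod.ext_iff, eq_comm (a := l.1.1), and_comm]
    rfl
  simp only [hleg]
  constructor
  · intro h
    by_cases hlit : l.1.2.val = 0 ∧ ∃ t, clauses ⟨l.1.1.2.val / 2, by omega⟩ t =
        (l.1.1.1, decide (l.1.1.2.val % 2 = 0))
    · obtain rfl := clauseVertex_injective ((if_pos hlit).symm.trans h)
      obtain ⟨hr, t, ht⟩ := hlit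
      exact ⟨t, Fin.ext hr, rfl, ht⟩
    · exact nomatch (if_neg hlit).symm.trans h
  · obtain ⟨j, hj⟩ := j
    rintro ⟨t, hr, rfl, ht⟩
    exact if_pos ⟨congrArg Fin.val hr, t, ht⟩

theorem inc_pendantA_iff {j : Fin m} {e : E0T n m} :
    Inc (ends0 n m clauses) e (pendantA j) ↔ e = edgeA j := by
  cases e using edge_cases with
  | leg l => grind [Inc, ends0, legTarget_eq_clauseVertex_or_baseVertex clauses l]
  | _ => grind [Inc, ends0]

theorem inc_pendantB_iff {j : Fin m} {e : E0T n m} :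
    Inc (ends0 n m clauses) e (pendantB j) ↔ e = edgeB j := by
  cases e using edge_cases with
  | leg l => grind [Inc, ends0, legTarget_eq_clauseVertex_or_baseVertex clauses l]
  | _ => grind [Inc, ends0]

theorem inc_parityVertex_iff {h : PLift (cond0 n m)} {e : E0T n m} :
    Inc (ends0 n m clauses) e (parityVertex h) ↔ e = parityEdge h := by
  cases e using edge_cases with
  | leg l => grind [Inc, ends0, legTarget_eq_clauseVertex_or_baseVertex clauses l]
  | _ => grind [Inc, ends0]

theorem subsingleton_inc_of_mem_pendants {v : V0T n m} (hv : v ∈ pendants n m) :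
    {e | Inc (ends0 n m clauses) e v}.Subsingleton := by
  rcases hv with (⟨j, rfl⟩ | ⟨j, rfl⟩) | ⟨h, rfl⟩
  exacts [fun _ h _ h' => (inc_pendantA_iff.1 h).trans (inc_pendantA_iff.1 h').symm,
    fun _ h _ h' => (inc_pendantB_iff.1 h).trans (inc_pendantB_iff.1 h').symm,
    fun _ h _ h' => (inc_parityVertex_iff.1 h).trans (inc_parityVertex_iff.1 h').symm]

theorem ends0_fst_of_snd_mem_pendants {e : E0T n m} (h : (ends0 n m clauses e).2 ∈ pendants n m) :
    (ends0 n m clauses e).1 = baseVertex := by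
  rcases h with (⟨j, h⟩ | ⟨j, h⟩) | ⟨h', h⟩
  · obtain rfl := inc_pendantA_iff.1 (Or.inr h.symm)
    exact nomatch h
  · obtain rfl := inc_pendantB_iff.1 (Or.inr h.symm)
    exact nomatch h
  · obtain rfl := inc_parityVertex_iff.1 (Or.inr h.symm)
    rfl

theorem inc_clauseVertex_iff {j : Fin m} {e : E0T n m} :
    Inc (ends0 n m clauses) e (clauseVertex j) ↔
      e = edgeA j ∨ e = edgeB j ∨ ∃ t, e = legEdge (literalLeg j (clauses j t)) := by
  cases e using edge_cases <;> grind [Inc, ends0, legTarget_eq_clauseVertex_iff]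

theorem inc_chainVertex_iff {q : ChainPos n m} {e : E0T n m} :
    Inc (ends0 n m clauses) e (chainVertex q) ↔
      (∃ c : ChainLink n m, (c.1 = q ∨ c.next = q) ∧ chainEdge c = e) ∨
        ∃ l : Leg n m, l.1.1 = q ∧ legEdge l = e := by
  cases e using edge_cases with
  | leg l => grind [Inc, ends0, legTarget_eq_clauseVertex_or_baseVertex clauses l]
  | _ => grind [Inc, ends0, ChainLink.next]

theorem ncard_chainLink_fst_eq (q : ChainPos n m) :
    {c : ChainLink n m | c.1 = q}.ncard = if q.2.val + 1 < 2 * m then 1 else 0 := by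
  split_ifs with h
  · refine Set.ncard_eq_one.2 ⟨⟨q, h⟩, ?_⟩
    ext c
    exact (Subtype.ext_iff (a1 := c) (a2 := ⟨q, h⟩)).symm
  · rw [Set.ncard_eq_zero, Set.eq_empty_iff_forall_notMem]
    rintro c rfl
    exact h c.2

theorem ncard_chainLink_next_eq (q : ChainPos n m) :
    {c : ChainLink n m | c.next = q}.ncard = if 0 < q.2.val then 1 else 0 := by
  split_ifs with h
  · refine Set.ncard_eq_one.2 ⟨⟨(q.1, ⟨q.2.val - 1, by omega⟩), by dsimp only; omega⟩, ?_⟩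
    ext c
    simp only [ChainLink.next, Set.mem_ofPred_eq, Set.mem_singleton_iff, Prod.ext_iff, Fin.ext_iff,
      Subtype.ext_iff]
    omega
  · rw [Set.ncard_eq_zero, Set.eq_empty_iff_forall_notMem]
    rintro c rfl
    exact h (Nat.succ_pos _)

theorem ncard_leg_fst_eq (q : ChainPos n m) :
    {l : Leg n m | l.1.1 = q}.ncard = legCount m q.2 := by
  have hle : legCount m q.2 ≤ 3 := by unfold legCount; split_ifs <;> omega
  have hrange : {l : Leg n m | l.1.1 = q} =
      Set.range fun r : Fin (legCount m q.2) => ⟨(q, r.castLE hle), r.2⟩ := by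
    ext l
    refine ⟨?_, ?_⟩
    · rintro rfl
      exact ⟨⟨l.1.2, l.2⟩, rfl⟩
    · rintro ⟨r, rfl⟩
      rfl
  rw [hrange, Set.ncard_range_of_injective, Nat.card_fin]
  intro r r' h
  simpa [Fin.ext_iff] using h

variable (clauses) in
theorem ncard_inc_chainVertex (q : ChainPos n m) :
    {e | Inc (ends0 n m clauses) e (chainVertex q)}.ncard = 4 := by
  have hunion : {e | Inc (ends0 n m clauses) e (chainVertex q)} =
      chainEdge '' ({c | c.1 = q} ∪ {c | c.next = q}) ∪ legEdge '' {l | l.1.1 = q} :=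
    Set.ext fun _ => inc_chainVertex_iff
  have hlinks : Disjoint {c : ChainLink n m | c.1 = q} {c | c.next = q} := by
    rw [Set.disjoint_left]
    rintro c rfl h
    simp [ChainLink.next, Prod.ext_iff, Fin.ext_iff] at h
  have hedges : Disjoint (chainEdge '' ({c | c.1 = q} ∪ {c | c.next = q}))
      (legEdge (n := n) (m := m) '' {l | l.1.1 = q}) := by
    rw [Set.disjoint_left]
    rintro _ ⟨c, -, rfl⟩ ⟨l, -, h⟩
    exact nomatch h
  rw [hunion, Set.ncard_union_eq hedges, Set.ncard_image_of_injective _ chainEdge_injective,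
    Set.ncard_image_of_injective _ legEdge_injective, Set.ncard_union_eq hlinks,
    ncard_chainLink_fst_eq, ncard_chainLink_next_eq, ncard_leg_fst_eq, legCount]
  split_ifs <;> omega

end Incidence

section Orientations

variable {n m : ℕ} {clauses : Fin m → Fin 3 → Fin n × Bool} {o : E0T n m → V0T n m}

theorem forall_mem_C0_iff :
    (∀ c ∈ C0 n m clauses, {e | o e = c.2} ≠ c.1) ↔
      (∀ q e₁ e₂, e₁ ≠ e₂ → Inc (ends0 n m clauses) e₁ (chainVertex q) →
        Inc (ends0 n m clauses) e₂ (chainVertex q) → {e | o e = chainVertex q} ≠ {e₁, e₂}) ∧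
      ∀ j, {e | o e = clauseVertex j} ≠ {edgeA j, edgeB j} := by
  refine ⟨fun h => ⟨fun q e₁ e₂ hne h₁ h₂ => h _ (Or.inl ⟨q, e₁, e₂, hne, h₁, h₂, rfl⟩),
    fun j => h _ (Or.inr ⟨j, rfl⟩)⟩, ?_⟩
  rintro ⟨hchain, hclause⟩ _ (⟨q, e₁, e₂, hne, h₁, h₂, rfl⟩ | ⟨j, rfl⟩)
  exacts [hchain q e₁ e₂ hne h₁ h₂, hclause j]

theorem even_indeg_clauseVertex_and_ne_pair_iff (ho : IsOrient (ends0 n m clauses) o) {j : Fin m}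
    (hinj : Function.Injective (clauses j)) (hpendant : ∀ v ∈ pendants n m, IsSource o v) :
    (Even (indeg o (clauseVertex j)) ∧ {e | o e = clauseVertex j} ≠ {edgeA j, edgeB j}) ↔
      ∃! t, o (legEdge (literalLeg j (clauses j t))) ≠ clauseVertex j := by
  refine ho.even_indeg_and_ne_pair_iff_existsUnique (Nat.card_fin 3) nofun
    (legEdge_injective.comp ((literalLeg_injective j).comp hinj)) nofun (fun e he => ?_)
    ((ho _).resolve_left (hpendant _ (pendantA_mem_pendants j) _))
    ((ho _).resolve_left (hpendant _ (pendantB_mem_pendants j) _))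
  rcases inc_clauseVertex_iff.1 he with rfl | rfl | ⟨t, rfl⟩
  exacts [Or.inl (Or.inl rfl), Or.inl (Or.inr rfl), Or.inr ⟨t, rfl⟩]

theorem even_and_conflictFree_iff (ho : IsOrient (ends0 n m clauses) o)
    (hinj : ∀ j, Function.Injective (clauses j)) :
    ((∀ x, Even (indeg o x)) ∧ ∀ c ∈ C0 n m clauses, {e | o e = c.2} ≠ c.1) ↔
      (∀ q, IsSink (ends0 n m clauses) o (chainVertex q) ∨ IsSource o (chainVertex q)) ∧
      (∀ v ∈ pendants n m, IsSource o v) ∧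
      ∀ j, ∃! t, o (legEdge (literalLeg j (clauses j t))) ≠ clauseVertex j := by
  rw [forall_mem_C0_iff]
  simp only [← ho.even_indeg_and_ne_pair_iff (ncard_inc_chainVertex clauses _)]
  constructor
  · rintro ⟨heven, hchain, hclause⟩
    have hpendant v (hv : v ∈ pendants n m) : IsSource o v :=
      (ho.even_indeg_iff_isSource (subsingleton_inc_of_mem_pendants hv)).1 (heven v)
    exact ⟨fun q => ⟨heven _, hchain q⟩, hpendant, fun j =>
      (even_indeg_clauseVertex_and_ne_pair_iff ho (hinj j) hpendant).1 ⟨heven _, hclause j⟩⟩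
  · rintro ⟨hchain, hpendant, hclause⟩
    have hclause' j :=
      (even_indeg_clauseVertex_and_ne_pair_iff ho (hinj j) hpendant).2 (hclause j)
    have heven v (hv : v ≠ baseVertex) : Even (indeg o v) := by
      cases v using vertex_cases with
      | chain q => exact (hchain q).1
      | clause j => exact (hclause' j).1
      | pendant v hmem => exact (hpendant v hmem).even_indeg
      | base => exact absurd rfl hv
    have hbase : Even (indeg o baseVertex) := even_indeg_of_forall_ne (even_card_E0T n m) heven
    exact ⟨fun v => (eq_or_ne v baseVertex).elim (fun hv => hv ▸ hbase) (heven v),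
      fun q => (hchain q).2, fun j => (hclause' j).2⟩

theorem head_literalLeg_ne_iff (ho : IsOrient (ends0 n m clauses) o)
    (hchain : ∀ q, IsSink (ends0 n m clauses) o (chainVertex q) ∨ IsSource o (chainVertex q))
    {j : Fin m} {t : Fin 3} :
    o (legEdge (literalLeg j (clauses j t))) ≠ clauseVertex j ↔
      IsSink (ends0 n m clauses) o (chainVertex (literalPos j (clauses j t))) := by
  have hends : ends0 n m clauses (legEdge (literalLeg j (clauses j t))) =
      (chainVertex (literalPos j (clauses j t)), clauseVertex j) :=
    Prod.ext rfl (legTarget_eq_clauseVertex_iff.2 ⟨t, rfl⟩)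
  rw [ho.head_ne_snd_iff hends nofun]
  exact head_eq_iff_isSink (Or.inl (congrArg Prod.fst hends)) (hchain _)

/-- The literal whose reserved leg is at position `q`, that is `X_i` for even `l` and `¬X_i` for
odd `l` if `q = (i, l)`, is true under the assignment `A`. -/
def IsTrueAt (A : Fin n → Bool) (q : ChainPos n m) : Prop := A q.1 = true ↔ Even q.2.val

variable {A : Fin n → Bool}

theorem isTrueAt_literalPos_iff {j : Fin m} {x : Fin n × Bool} :
    IsTrueAt A (literalPos j x) ↔ A x.1 = x.2 := by
  have heven : Even (literalPos j x).2.val ↔ x.2 = true := by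
    obtain ⟨i, b⟩ := x
    cases b <;> simp [literalPos]
  rw [IsTrueAt, heven]
  exact Bool.eq_iff_iff.symm

theorem isTrueAt_next_iff {c : ChainLink n m} : IsTrueAt A c.next ↔ ¬ IsTrueAt A c.1 := by
  simp only [IsTrueAt, ChainLink.next, Nat.even_add_one]
  tauto

variable (clauses A) in
/-- The orientation of `G_I` induced by the assignment `A`: the chain vertices of true literals are
the sinks on the chains. Adding `v₀` only affects `v₀v₀'`, which has to leave `v₀'`. -/
def assignmentOrientation : E0T n m → V0T n m :=
  orientInto (insert baseVertex (chainVertex '' {q | IsTrueAt A q})) (ends0 n m clauses)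

theorem isOrient_assignmentOrientation :
    IsOrient (ends0 n m clauses) (assignmentOrientation clauses A) :=
  isOrient_orientInto _ _

theorem exists_next_eq_of_ends0_snd_eq {e : E0T n m} {q : ChainPos n m}
    (h : (ends0 n m clauses e).2 = chainVertex q) :
    ∃ c : ChainLink n m, c.next = q ∧ chainEdge c = e := by
  cases e using edge_cases with
  | leg l => grind [ends0, legTarget_eq_clauseVertex_or_baseVertex clauses l]
  | _ => grind [ends0, ChainLink.next]

theorem isSink_assignmentOrientation {q : ChainPos n m} (hq : IsTrueAt A q) :
    IsSink (ends0 n m clauses) (assignmentOrientation clauses A) (chainVertex q) := by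
  refine isSink_orientInto (Or.inr ⟨q, hq, rfl⟩) fun e he => ?_
  obtain ⟨c, rfl, rfl⟩ := exists_next_eq_of_ends0_snd_eq he
  rintro (h | ⟨q', hq', h⟩)
  · exact nomatch h
  · obtain rfl := chainVertex_injective h
    exact isTrueAt_next_iff.1 hq hq'

theorem isSource_assignmentOrientation {q : ChainPos n m} (hq : ¬ IsTrueAt A q) :
    IsSource (assignmentOrientation clauses A) (chainVertex q) := by
  refine isSource_orientInto ?_ fun e he => ?_
  · rintro (h | ⟨q', hq', h⟩)
    · exact nomatch h
    · exact hq (chainVertex_injective h ▸ hq')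
  · obtain ⟨c, rfl, rfl⟩ := exists_next_eq_of_ends0_snd_eq he
    exact Or.inr ⟨c.1, not_not.1 (mt isTrueAt_next_iff.2 hq), rfl⟩

theorem isSink_assignmentOrientation_iff {q : ChainPos n m} :
    IsSink (ends0 n m clauses) (assignmentOrientation clauses A) (chainVertex q) ↔
      IsTrueAt A q := by
  refine ⟨fun hsink => ?_, isSink_assignmentOrientation⟩
  by_contra hq
  obtain ⟨e, he⟩ : {e | Inc (ends0 n m clauses) e (chainVertex q)}.Nonempty :=
    Set.nonempty_of_ncard_ne_zero (by simp [ncard_inc_chainVertex])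
  exact isSource_assignmentOrientation hq e (hsink e he)

theorem isSink_or_isSource_assignmentOrientation (q : ChainPos n m) :
    IsSink (ends0 n m clauses) (assignmentOrientation clauses A) (chainVertex q) ∨
      IsSource (assignmentOrientation clauses A) (chainVertex q) :=
  (em (IsTrueAt A q)).imp isSink_assignmentOrientation isSource_assignmentOrientation

theorem isSource_assignmentOrientation_of_mem_pendants {v : V0T n m} (hv : v ∈ pendants n m) :
    IsSource (assignmentOrientation clauses A) v := by
  refine isSource_orientInto ?_ fun e he => Or.inl (ends0_fst_of_snd_mem_pendants (he ▸ hv))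
  grind [pendants]

theorem exists_iff_even_of_alternating {N : ℕ} {P : Fin N → Prop}
    (h : ∀ l (hl : l + 1 < N), P ⟨l + 1, hl⟩ ↔ ¬ P ⟨l, Nat.lt_of_succ_lt hl⟩) :
    ∃ b : Bool, ∀ l, P l ↔ (b = true ↔ Even l.val) := by
  refine ⟨decide (∀ hN : 0 < N, P ⟨0, hN⟩), fun ⟨l, hl⟩ => ?_⟩
  rw [decide_eq_true_iff]
  induction l with
  | zero => simp [hl]
  | succ l ih =>
    rw [h, ih (Nat.lt_of_succ_lt hl), Nat.even_add_one]
    tauto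

theorem exists_isSink_iff_isTrueAt (ho : IsOrient (ends0 n m clauses) o)
    (hchain : ∀ q, IsSink (ends0 n m clauses) o (chainVertex q) ∨ IsSource o (chainVertex q)) :
    ∃ A : Fin n → Bool, ∀ q, IsSink (ends0 n m clauses) o (chainVertex q) ↔ IsTrueAt A q := by
  have halternates (i : Fin n) := exists_iff_even_of_alternating
    (P := fun l => IsSink (ends0 n m clauses) o (chainVertex (i, l))) fun l hl =>
      ho.isSink_snd_iff_not_isSink_fst (e := chainEdge ⟨(i, ⟨l, Nat.lt_of_succ_lt hl⟩), hl⟩) rfl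
        (chainVertex_injective.ne (by simp)) (hchain _) (hchain _)
  choose A hA using halternates
  exact ⟨A, fun q => hA q.1 q.2⟩

end Orientations

theorem stmt_0_general (n m : ℕ) (clauses : Fin m → Fin 3 → Fin n × Bool)
    (hinj : ∀ j, Function.Injective (clauses j)) :
    (∃ A : Fin n → Bool, ∀ j : Fin m, ∃! t : Fin 3, A (clauses j t).1 = (clauses j t).2) ↔
    (∃ o : E0T n m → V0T n m, IsOrient (ends0 n m clauses) o ∧
        (∀ x, Even (indeg o x)) ∧
        ∀ c ∈ C0 n m clauses, {e | o e = c.2} ≠ c.1) := by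
  constructor
  · rintro ⟨A, hA⟩
    have ho := isOrient_assignmentOrientation (clauses := clauses) (A := A)
    have hchain := isSink_or_isSource_assignmentOrientation (clauses := clauses) (A := A)
    refine ⟨_, ho, (even_and_conflictFree_iff ho hinj).2 ⟨hchain,
      fun _ => isSource_assignmentOrientation_of_mem_pendants, fun j => ?_⟩⟩
    simpa only [head_literalLeg_ne_iff ho hchain, isSink_assignmentOrientation_iff,
      isTrueAt_literalPos_iff] using hA j
  · rintro ⟨o, ho, hfree⟩
    obtain ⟨hchain, -, hclause⟩ := (even_and_conflictFree_iff ho hinj).1 hfree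
    obtain ⟨A, hA⟩ := exists_isSink_iff_isTrueAt ho hchain
    refine ⟨A, fun j => ?_⟩
    simpa only [head_literalLeg_ne_iff ho hchain, hA, isTrueAt_literalPos_iff] using hclause j

/-- a (1-in-3)-SAT instance (with three literals on three distinct variables
per clause) is satisfiable with exactly one true literal per clause iff the constructed
multigraph `G_I` has an even orientation violating no exact conflict pair of `C_I`. -/
theorem stmt_0 (n m : ℕ) (clauses : Fin m → Fin 3 → Fin n × Bool)
    (hdistinct : ∀ j, Function.Injective fun t => (clauses j t).1) :
    (∃ A : Fin n → Bool, ∀ j : Fin m, ∃! t : Fin 3, A (clauses j t).1 = (clauses j t).2) ↔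
    (∃ o : E0T n m → V0T n m, IsOrient (ends0 n m clauses) o ∧
        (∀ x, Even (indeg o x)) ∧
        ∀ c ∈ C0 n m clauses, {e | o e = c.2} ≠ c.1) :=
  stmt_0_general n m clauses fun j => .of_comp (hdistinct j)
end
end

section
/- Let G_1=(V_1,E_1) be a finite multigraph, V_0 a subset of V_1, and p: V_0 -> {0,1} a parity constraint. Let W = {v in V_0 : p(v)=1}, and let G_2 be obtained from G_1 by adding, for each v in W, a new (dummy) vertex v' and a new edge vv'; write W' for the set of dummy vertices. For an orientation o of G_1 let sat(o) be the number of v in V_0 with indegree congruent to p(v) modulo 2, and for an orientation o' of G_2 let sat'(o') be the number of vertices in V_0 union W' with even indegree. Then the maximum of sat'(o') over all orientations o' of G_2 equals |W| plus the maximum of sat(o) over all orientations o of G_1. -/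
open scoped Classical

noncomputable section

/-- Incidence map of the graph `G₂` obtained from `G₁` by attaching, at every vertex of
`W`, a pendant dummy vertex (an element of `W` in the right summand) by a single edge. -/
def dummyEnds {V₁ E₁ : Type*} (ends₁ : E₁ → V₁ × V₁) (W : Set V₁) :
    (E₁ ⊕ W) → (V₁ ⊕ W) × (V₁ ⊕ W)
  | Sum.inl e => (Sum.inl (ends₁ e).1, Sum.inl (ends₁ e).2)
  | Sum.inr w => (Sum.inl w.1, Sum.inr w)

/-!
An orientation of `G₂` is an orientation `o` of `G₁` together with the set `T ⊆ W` of vertices that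
receive their pendant edge. The dummy vertices of even indegree are those attached at `T`, and for
vertices of `V₀` outside `W \ T` having even indegree in `G₂` amounts to meeting the parity
constraint in `G₁`. So passing from `G₁` to `G₂` gains `|T|` dummy vertices and at most `|W \ T|`
vertices of `V₀`, that is at most `|W|` in total, with equality for `T = W`.
-/

/-- The number of vertices of `V₀` that satisfy the parity constraint `p` under `o`. -/
def satCount {V E : Type*} (V₀ : Set V) (p : V → Fin 2) (o : E → V) : ℕ :=
  {v | v ∈ V₀ ∧ indeg o v % 2 = (p v : ℕ)}.ncard

/-- The number of vertices of even indegree among `V₀` and the dummy vertices,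
which are the elements of the right summand. -/
def evenCount {V F : Type*} {W : Set V} (V₀ : Set V) (o' : F → V ⊕ W) : ℕ :=
  {x | ((∃ v ∈ V₀, x = Sum.inl v) ∨ ∃ w, x = Sum.inr w) ∧ Even (indeg o' x)}.ncard

/-- The orientation of the graph with pendant edges that extends `o` and directs the pendant edge
at `w` towards `w` if `w ∈ T`, and towards the dummy vertex otherwise. -/
def extendOrient {V E : Type*} {W : Set V} (o : E → V) (T : Set W) : E ⊕ W → V ⊕ W
  | Sum.inl e => Sum.inl (o e)
  | Sum.inr w => if w ∈ T then Sum.inl w.1 else Sum.inr w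

lemma exists_isOrient {V E : Type*} (ends : E → V × V) : ∃ o, IsOrient ends o :=
  ⟨fun e => (ends e).1, fun _ => Or.inl rfl⟩

lemma IsOrient.finite_fiber {V E : Type*} {ends : E → V × V} {o : E → V} (ho : IsOrient ends o)
    {v : V} (hv : {e | Inc ends e v}.Finite) : {e | o e = v}.Finite :=
  hv.subset fun e he => (ho e).imp (fun h => h.symm.trans he) fun h => h.symm.trans he

section ExtendOrient

variable {V E : Type*} {W : Set V} {ends : E → V × V} {o : E → V} {T : Set W} {v : V}

lemma isOrient_dummyEnds_iff {o' : E ⊕ W → V ⊕ W} :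
    IsOrient (dummyEnds ends W) o' ↔ ∃ o, IsOrient ends o ∧ ∃ T, extendOrient o T = o' := by
  constructor
  · intro h
    have hedge (e : E) : ∃ v, (v = (ends e).1 ∨ v = (ends e).2) ∧ Sum.inl v = o' (Sum.inl e) :=
      (h (Sum.inl e)).elim (fun he => ⟨_, Or.inl rfl, he.symm⟩) fun he => ⟨_, Or.inr rfl, he.symm⟩
    choose o ho hoo' using hedge
    refine ⟨o, ho, {w | o' (Sum.inr w) = Sum.inl w.1}, ?_⟩
    ext (e | w) : 1
    · exact hoo' e
    · by_cases hw : o' (Sum.inr w) = Sum.inl w.1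
      · simp [extendOrient, hw]
      · have hdummy : o' (Sum.inr w) = Sum.inr w := (h (Sum.inr w)).resolve_left hw
        simp [extendOrient, hdummy]
  · rintro ⟨o, ho, T, rfl⟩ (e | w)
    · exact (ho e).imp (congrArg Sum.inl) (congrArg Sum.inl)
    · exact ite_eq_or_eq _ _ _

lemma extendOrient_inr_eq_inl_iff {u : W} :
    extendOrient o T (Sum.inr u) = Sum.inl v ↔ u ∈ T ∧ u.1 = v := by
  by_cases hu : u ∈ T <;> simp [extendOrient, hu]

lemma extendOrient_inr_eq_inr_iff {u w : W} :
    extendOrient o T (Sum.inr u) = Sum.inr w ↔ u ∉ T ∧ u = w := by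
  by_cases hu : u ∈ T <;> simp [extendOrient, hu]

lemma indeg_extendOrient_inl_of_mem {w : W} (hw : w ∈ T) (hfin : {e | o e = w.1}.Finite) :
    indeg (extendOrient o T) (Sum.inl w.1) = indeg o w.1 + 1 := by
  have hfiber : {e | extendOrient o T e = Sum.inl w.1} =
      insert (Sum.inr w) (Sum.inl '' {e | o e = w.1}) := by
    ext (e | u)
    · simp [extendOrient]
    · simpa [extendOrient_inr_eq_inl_iff, Subtype.ext_iff] using fun h : u.1 = w.1 =>
        Subtype.ext h ▸ hw
  calc indeg (extendOrient o T) (Sum.inl w.1)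
      = (insert (Sum.inr w) (Sum.inl '' {e | o e = w.1}) : Set (E ⊕ W)).ncard :=
        congrArg Set.ncard hfiber
    _ = (Sum.inl '' {e | o e = w.1} : Set (E ⊕ W)).ncard + 1 :=
        Set.ncard_insert_of_notMem (by simp) (hfin.image _)
    _ = indeg o w.1 + 1 := by rw [Set.ncard_image_of_injective _ Sum.inl_injective]; rfl

lemma indeg_extendOrient_inl_of_notMem (hv : v ∉ Subtype.val '' T) :
    indeg (extendOrient o T) (Sum.inl v) = indeg o v := by
  have hfiber : {e | extendOrient o T e = Sum.inl v} = Sum.inl '' {e | o e = v} := by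
    ext (e | u)
    · simp [extendOrient]
    · simpa [extendOrient_inr_eq_inl_iff] using fun hu huv => hv ⟨u, hu, huv⟩
  exact (congrArg Set.ncard hfiber).trans (Set.ncard_image_of_injective _ Sum.inl_injective)

lemma even_indeg_extendOrient_inr_iff {w : W} :
    Even (indeg (extendOrient o T) (Sum.inr w)) ↔ w ∈ T := by
  have hfiber : {e | extendOrient o T e = Sum.inr w} = {e | e = Sum.inr w ∧ w ∉ T} := by
    ext (e | u)
    · simp [extendOrient]
    · simp only [Set.mem_ofPred_eq, extendOrient_inr_eq_inr_iff, Sum.inr.injEq]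
      grind
  have hindeg : indeg (extendOrient o T) (Sum.inr w) = {e | e = Sum.inr w ∧ w ∉ T}.ncard :=
    congrArg Set.ncard hfiber
  by_cases hw : w ∈ T <;> simp [hindeg, hw]

lemma even_indeg_extendOrient_inl_iff {p : V → Fin 2} (hp : v ∈ W ↔ p v = 1)
    (hfin : {e | o e = v}.Finite) (hv : v ∉ Subtype.val '' Tᶜ) :
    Even (indeg (extendOrient o T) (Sum.inl v)) ↔ indeg o v % 2 = (p v : ℕ) := by
  by_cases hW : v ∈ W
  · have hT : ⟨v, hW⟩ ∈ T := by_contra fun h => hv ⟨_, h, rfl⟩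
    have hpv : (p v : ℕ) = 1 := congrArg Fin.val (hp.1 hW)
    rw [indeg_extendOrient_inl_of_mem hT hfin, hpv, Nat.even_add_one, Nat.not_even_iff]
  · have hpv : (p v : ℕ) = 0 := by have := mt hp.2 hW; omega
    have hT : v ∉ Subtype.val '' T := by rintro ⟨w, -, rfl⟩; exact hW w.2
    rw [indeg_extendOrient_inl_of_notMem hT, hpv, Nat.even_iff]

end ExtendOrient

section Counting

variable {V E : Type*} {W V₀ : Set V} {ends : E → V × V} {p : V → Fin 2} {o : E → V} {T : Set W}

lemma satCount_le (hV₀ : V₀.Finite) : satCount V₀ p o ≤ V₀.ncard :=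
  Set.ncard_le_ncard (fun _ hv => hv.1) hV₀

lemma isGreatest_sSup_satCount (hV₀ : V₀.Finite) :
    IsGreatest (satCount V₀ p '' {o | IsOrient ends o})
      (sSup (satCount V₀ p '' {o | IsOrient ends o})) := by
  have hne : (satCount V₀ p '' {o | IsOrient ends o}).Nonempty :=
    Set.Nonempty.image _ (exists_isOrient ends)
  have hbdd : BddAbove (satCount V₀ p '' {o | IsOrient ends o}) :=
    ⟨V₀.ncard, Set.forall_mem_image.2 fun _ _ => satCount_le hV₀⟩
  exact ⟨Nat.sSup_mem hne hbdd, fun _ hs => le_csSup hbdd hs⟩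

lemma evenCount_eq_add {F : Type*} [Finite W] (hV₀ : V₀.Finite) (o' : F → V ⊕ W) :
    evenCount V₀ o' = {v | v ∈ V₀ ∧ Even (indeg o' (Sum.inl v))}.ncard +
      {w : W | Even (indeg o' (Sum.inr w))}.ncard := by
  have hsplit : {x | ((∃ v ∈ V₀, x = Sum.inl v) ∨ ∃ w, x = Sum.inr w) ∧ Even (indeg o' x)} =
      Sum.inl '' {v | v ∈ V₀ ∧ Even (indeg o' (Sum.inl v))} ∪
        Sum.inr '' {w : W | Even (indeg o' (Sum.inr w))} := by
    ext (v | w) <;> simp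
  have hdisj : Disjoint (Sum.inl '' {v | v ∈ V₀ ∧ Even (indeg o' (Sum.inl v))})
      (Sum.inr '' {w : W | Even (indeg o' (Sum.inr w))}) :=
    Set.disjoint_image_inl_image_inr
  rw [evenCount, hsplit,
    Set.ncard_union_eq hdisj ((hV₀.subset fun _ hv => hv.1).image _) (Set.toFinite _),
    Set.ncard_image_of_injective _ Sum.inl_injective,
    Set.ncard_image_of_injective _ Sum.inr_injective]

lemma evenCount_extendOrient [Finite W] (hV₀ : V₀.Finite) :
    evenCount V₀ (extendOrient o T) =
      {v | v ∈ V₀ ∧ Even (indeg (extendOrient o T) (Sum.inl v))}.ncard + T.ncard := by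
  simp only [evenCount_eq_add hV₀, even_indeg_extendOrient_inr_iff, Set.ofPred_mem_eq]

lemma evenCount_extendOrient_le [Finite W] (hV₀ : V₀.Finite) (hW : ∀ v ∈ V₀, v ∈ W ↔ p v = 1)
    (hfin : ∀ v ∈ V₀, {e | o e = v}.Finite) :
    evenCount V₀ (extendOrient o T) ≤ Nat.card W + satCount V₀ p o := by
  have hsub : {v | v ∈ V₀ ∧ Even (indeg (extendOrient o T) (Sum.inl v))} ⊆
      {v | v ∈ V₀ ∧ indeg o v % 2 = (p v : ℕ)} ∪ Subtype.val '' Tᶜ := fun v hv =>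
    or_iff_not_imp_right.2 fun hT =>
      ⟨hv.1, (even_indeg_extendOrient_inl_iff (hW v hv.1) (hfin v hv.1) hT).1 hv.2⟩
  calc evenCount V₀ (extendOrient o T)
      = {v | v ∈ V₀ ∧ Even (indeg (extendOrient o T) (Sum.inl v))}.ncard + T.ncard :=
        evenCount_extendOrient hV₀
    _ ≤ satCount V₀ p o + (Subtype.val '' Tᶜ).ncard + T.ncard := by
        gcongr
        exact (Set.ncard_le_ncard hsub ((hV₀.subset fun _ hv => hv.1).union (Set.toFinite _))).trans
          (Set.ncard_union_le _ _)
    _ = satCount V₀ p o + (T.ncard + Tᶜ.ncard) := by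
        rw [Set.ncard_image_of_injective _ Subtype.val_injective]
        ring
    _ = Nat.card W + satCount V₀ p o := by rw [Set.ncard_add_ncard_compl, add_comm]

lemma evenCount_extendOrient_univ [Finite W] (hV₀ : V₀.Finite) (hW : ∀ v ∈ V₀, v ∈ W ↔ p v = 1)
    (hfin : ∀ v ∈ V₀, {e | o e = v}.Finite) :
    evenCount V₀ (extendOrient o (Set.univ : Set W)) = Nat.card W + satCount V₀ p o := by
  have hsat : {v | v ∈ V₀ ∧ Even (indeg (extendOrient o (Set.univ : Set W)) (Sum.inl v))} =
      {v | v ∈ V₀ ∧ indeg o v % 2 = (p v : ℕ)} :=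
    Set.ext fun v => and_congr_right fun hv =>
      even_indeg_extendOrient_inl_iff (hW v hv) (hfin v hv) (by simp)
  rw [evenCount_extendOrient hV₀, hsat, Set.ncard_univ, add_comm, satCount]

lemma isGreatest_evenCount [Finite W] (hV₀ : V₀.Finite) (hW : ∀ v ∈ V₀, v ∈ W ↔ p v = 1)
    (hfin : ∀ v ∈ V₀, {e | Inc ends e v}.Finite) {n : ℕ}
    (hn : IsGreatest (satCount V₀ p '' {o | IsOrient ends o}) n) :
    IsGreatest (evenCount V₀ '' {o' | IsOrient (dummyEnds ends W) o'}) (Nat.card W + n) := by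
  obtain ⟨⟨o, ho, rfl⟩, hmax⟩ := hn
  constructor
  · exact ⟨extendOrient o Set.univ, isOrient_dummyEnds_iff.2 ⟨o, ho, _, rfl⟩,
      evenCount_extendOrient_univ hV₀ hW fun v hv => ho.finite_fiber (hfin v hv)⟩
  · rintro _ ⟨o', ho', rfl⟩
    obtain ⟨q, hq, T, rfl⟩ := isOrient_dummyEnds_iff.1 ho'
    calc evenCount V₀ (extendOrient q T)
        ≤ Nat.card W + satCount V₀ p q :=
          evenCount_extendOrient_le hV₀ hW fun v hv => hq.finite_fiber (hfin v hv)
      _ ≤ Nat.card W + satCount V₀ p o := by gcongr; exact hmax ⟨q, hq, rfl⟩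

end Counting

theorem stmt_2_general {V₁ E₁ : Type*} (ends₁ : E₁ → V₁ × V₁)
    (V₀ : Set V₁) (hV₀ : V₀.Finite) (hfin : ∀ v ∈ V₀, {e | Inc ends₁ e v}.Finite)
    (p : V₁ → Fin 2) :
    sSup {s : ℕ |
        ∃ o' : (E₁ ⊕ {v : V₁ | v ∈ V₀ ∧ p v = 1}) → (V₁ ⊕ {v : V₁ | v ∈ V₀ ∧ p v = 1}),
          IsOrient (dummyEnds ends₁ {v : V₁ | v ∈ V₀ ∧ p v = 1}) o' ∧
          Nat.card {x : V₁ ⊕ {v : V₁ | v ∈ V₀ ∧ p v = 1} //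
              ((∃ v ∈ V₀, x = Sum.inl v) ∨ (∃ w, x = Sum.inr w)) ∧ Even (indeg o' x)} = s}
      =
      Nat.card {v : V₁ // v ∈ V₀ ∧ p v = 1} +
        sSup {s : ℕ | ∃ o : E₁ → V₁, IsOrient ends₁ o ∧
          Nat.card {v : V₁ // v ∈ V₀ ∧ indeg o v % 2 = (p v : ℕ)} = s} := by
  have : Finite {v : V₁ | v ∈ V₀ ∧ p v = 1} := hV₀.subset fun _ hv => hv.1
  have hW : ∀ v ∈ V₀, v ∈ {v : V₁ | v ∈ V₀ ∧ p v = 1} ↔ p v = 1 := fun _ hv => and_iff_right hv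
  exact (isGreatest_evenCount hV₀ hW hfin (isGreatest_sSup_satCount hV₀)).csSup_eq

/-- attaching a pendant dummy vertex at every vertex with odd parity
constraint turns all constraints into evenness constraints: the maximum number of
satisfied constraints goes up by exactly `|W|`, the number of dummy vertices. -/
theorem stmt_2 {V₁ E₁ : Type*} [Finite V₁] [Finite E₁] (ends₁ : E₁ → V₁ × V₁)
    (hloop : ∀ e, (ends₁ e).1 ≠ (ends₁ e).2)
    (V₀ : Set V₁) (p : V₁ → Fin 2) :
    sSup {s : ℕ |
        ∃ o' : (E₁ ⊕ {v : V₁ | v ∈ V₀ ∧ p v = 1}) → (V₁ ⊕ {v : V₁ | v ∈ V₀ ∧ p v = 1}),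
          IsOrient (dummyEnds ends₁ {v : V₁ | v ∈ V₀ ∧ p v = 1}) o' ∧
          Nat.card {x : V₁ ⊕ {v : V₁ | v ∈ V₀ ∧ p v = 1} //
              ((∃ v ∈ V₀, x = Sum.inl v) ∨ (∃ w, x = Sum.inr w)) ∧ Even (indeg o' x)} = s}
      =
      Nat.card {v : V₁ // v ∈ V₀ ∧ p v = 1} +
        sSup {s : ℕ | ∃ o : E₁ → V₁, IsOrient ends₁ o ∧
          Nat.card {v : V₁ // v ∈ V₀ ∧ indeg o v % 2 = (p v : ℕ)} = s} := by
  exact stmt_2_general ends₁ V₀ V₀.toFinite (fun _ _ => Set.toFinite _) p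
end
end

section
/- For every integer k >= 2 there exists a switching network N_k, that is, a finite multigraph with k distinguished degree-1 input leaves a_1,...,a_k (whose pendant edges are the input edges), k distinguished degree-1 output leaves b_1,...,b_k (whose pendant edges are the output edges), and a family of pairwise disjoint exact conflict pairs, with the following properties, where an orientation is called valid if every non-leaf vertex has even indegree and no exact conflict pair equals the set of incoming edges at its vertex, an input edge is right-oriented if its head is not its leaf a_i, and an output edge is right-oriented if its head is its leaf b_j: (P0) every assignment of orientations to the k input edges extends to a valid orientation of N_k; (P1) in every valid orientation, the number of right-oriented output edges equals the number of right-oriented input edges; (P2) whenever exactly l input edges are right-oriented with 0 < l < k, there is a valid orientation with those input orientations in which the output edge at b_1 is right-oriented and the output edge at b_2 is not. Moreover, N_k can be chosen with at most 6k non-leaf vertices. -/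
open scoped Classical

noncomputable section

/-- A switching network with `k` inputs and `k` outputs: a finite multigraph with `2k`
distinct degree-one leaves `a 0, …, a (k-1)` (inputs, with pendant input edges `ain i`) and
`b 0, …, b (k-1)` (outputs, with pendant output edges `bout i`), together with a family of
pairwise disjoint exact conflict pairs. -/
structure SwitchNet (k : ℕ) where
  V : Type
  E : Type
  finV : Finite V
  finE : Finite E
  ends : E → V × V
  noloop : ∀ e, (ends e).1 ≠ (ends e).2
  a : Fin k → V
  b : Fin k → V
  ain : Fin k → E
  bout : Fin k → E
  leaves_inj : Function.Injective (Sum.elim a b : Fin k ⊕ Fin k → V)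
  ain_inc : ∀ i, Inc ends (ain i) (a i)
  a_deg : ∀ i, Nat.card {e : E // Inc ends e (a i)} = 1
  bout_inc : ∀ i, Inc ends (bout i) (b i)
  b_deg : ∀ i, Nat.card {e : E // Inc ends e (b i)} = 1
  conf : Set (Set E × V)
  conf_pairs : ∀ c ∈ conf, (∃ e₁ e₂ : E, e₁ ≠ e₂ ∧ c.1 = ({e₁, e₂} : Set E)) ∧
    ∀ e ∈ c.1, Inc ends e c.2
  conf_disj : ∀ c₁ ∈ conf, ∀ c₂ ∈ conf, c₁ ≠ c₂ → c₁.2 = c₂.2 → Disjoint c₁.1 c₂.1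

namespace SwitchNet

variable {k : ℕ} (N : SwitchNet k)

/-- The leaves of the network. -/
def IsLeaf (x : N.V) : Prop := (∃ i, x = N.a i) ∨ (∃ i, x = N.b i)

/-- A valid orientation: every non-leaf vertex has even indegree, and no exact conflict
pair equals the set of incoming edges at its vertex. -/
def Valid (o : N.E → N.V) : Prop :=
  IsOrient N.ends o ∧ (∀ x, ¬ N.IsLeaf x → Even (indeg o x)) ∧
    ∀ c ∈ N.conf, {e | o e = c.2} ≠ c.1

/-- The input edge `ain i` is right-oriented: its head is not the leaf `a i`. -/
def RightIn (o : N.E → N.V) (i : Fin k) : Prop := o (N.ain i) ≠ N.a i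

/-- The output edge `bout i` is right-oriented: its head is the leaf `b i`. -/
def RightOut (o : N.E → N.V) (i : Fin k) : Prop := o (N.bout i) = N.b i

/-- Property P0: every assignment of orientations to the input edges extends to a
valid orientation. -/
def P0 : Prop :=
  ∀ s : Fin k → Bool, ∃ o, N.Valid o ∧ ∀ i, (N.RightIn o i ↔ s i = true)

/-- Property P1: in every valid orientation, the number of right-oriented output edges
equals the number of right-oriented input edges. -/
def P1 : Prop :=
  ∀ o, N.Valid o → Nat.card {i : Fin k // N.RightOut o i} = Nat.card {i : Fin k // N.RightIn o i}

/-- Property P2: whenever some but not all input edges are right-oriented, there is a valid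
orientation with those input orientations in which `bout 0` (the output at `b₁`) is
right-oriented and `bout 1` (the output at `b₂`) is not. -/
def P2 : Prop :=
  ∀ s : Fin k → Bool, (∃ i, s i = true) → (∃ i, s i = false) →
    ∃ o, N.Valid o ∧ (∀ i, N.RightIn o i ↔ s i = true) ∧
      ∀ (h₀ : 0 < k) (h₁ : 1 < k), N.RightOut o ⟨0, h₀⟩ ∧ ¬ N.RightOut o ⟨1, h₁⟩

end SwitchNet

/-!
A switch is a pair of degree-4 vertices joined by two parallel edges; at each of them, the two
parallel edges form one conflict pair and the two edges leaving the switch form another. The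
indegree is then even and avoids both conflicts exactly if the vertex has as many incoming edges
in one pair as in the other. Hence a switch passes on the number of signals it receives, in any
arrangement: valid orientations amount to flows of signals that are conserved at every switch,
which gives P1, and a switch can act as a comparator, so that a network of comparators on `k` lines
turns into a switching network with two vertices per comparator. Sweeping the largest signal to
line `0`, and then the smallest of the others to line `1`, takes `2 * k - 3` comparators.
-/

section ExactPairs

variable {α : Type*} {A B I : Set α}

theorem eq_iff_ncard_inter_of_subset_union (hA : A.Finite) (hB : B.Finite) (hAB : Disjoint A B)
    (hI : I ⊆ A ∪ B) : I = A ↔ (I ∩ A).ncard = A.ncard ∧ (I ∩ B).ncard = 0 := by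
  rw [Set.ncard_eq_zero (hB.subset Set.inter_subset_right), ← Set.disjoint_iff_inter_eq_empty]
  constructor
  · rintro rfl
    exact ⟨by rw [Set.inter_self], hAB⟩
  · rintro ⟨hcard, hdisj⟩
    have hinter : I ∩ A = A :=
      Set.eq_of_subset_of_ncard_le Set.inter_subset_right hcard.ge hA
    exact (hdisj.subset_left_of_subset_union hI).antisymm (Set.inter_eq_right.1 hinter)

theorem even_ncard_and_ne_iff_ncard_inter_eq (hA : A.ncard = 2) (hB : B.ncard = 2)
    (hAB : Disjoint A B) (hI : I ⊆ A ∪ B) :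
    (Even I.ncard ∧ I ≠ A ∧ I ≠ B) ↔ (I ∩ A).ncard = (I ∩ B).ncard := by
  have hAfin : A.Finite := Set.finite_of_ncard_ne_zero (by lia)
  have hBfin : B.Finite := Set.finite_of_ncard_ne_zero (by lia)
  have hcard : I.ncard = (I ∩ A).ncard + (I ∩ B).ncard := by
    rw [← Set.ncard_union_eq (hAB.mono Set.inter_subset_right Set.inter_subset_right)
      (hAfin.subset Set.inter_subset_right) (hBfin.subset Set.inter_subset_right),
      ← Set.inter_union_distrib_left, Set.inter_eq_left.2 hI]
  have hleA : (I ∩ A).ncard ≤ 2 := hA ▸ Set.ncard_le_ncard Set.inter_subset_right hAfin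
  have hleB : (I ∩ B).ncard ≤ 2 := hB ▸ Set.ncard_le_ncard Set.inter_subset_right hBfin
  rw [hcard, ne_eq, eq_iff_ncard_inter_of_subset_union hAfin hBfin hAB hI, ne_eq,
    eq_iff_ncard_inter_of_subset_union hBfin hAfin hAB.symm (Set.union_comm A B ▸ hI), hA, hB]
  grind

end ExactPairs

theorem natCard_subtype_eq_sum_toNat {ι : Type*} [Fintype ι] (f : ι → Bool) :
    Nat.card {i // f i = true} = ∑ i, (f i).toNat := by
  rw [Nat.card_eq_fintype_card, Fintype.card_subtype, Finset.card_filter]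
  exact Finset.sum_congr rfl fun i _ => by cases f i <;> rfl

theorem sum_toNat_not_eq_iff {ι : Type*} [Fintype ι] (f g : ι → Bool) :
    ∑ i, (!f i).toNat = ∑ i, (!g i).toNat ↔ ∑ i, (f i).toNat = ∑ i, (g i).toNat := by
  have sum_add (h : ι → Bool) : ∑ i, (!h i).toNat + ∑ i, (h i).toNat = Fintype.card ι := by
    rw [← Finset.sum_add_distrib, Fintype.card_eq_sum_ones]
    exact Finset.sum_congr rfl fun i _ => by cases h i <;> rfl
  have := sum_add f
  have := sum_add g
  lia

theorem ncard_inter_range_eq_sum_toNat {ι α : Type*} [Fintype ι] {p : ι → α} (hp : p.Injective)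
    {I : Set α} {f : ι → Bool} (hf : ∀ i, p i ∈ I ↔ f i = true) :
    (I ∩ Set.range p).ncard = ∑ i, (f i).toNat := by
  rw [← Set.image_preimage_eq_inter_range, Set.ncard_image_of_injective _ hp,
    ← natCard_subtype_eq_sum_toNat]
  exact Nat.card_congr (Equiv.subtypeEquivRight hf)

theorem IsOrient.inc_s6 {V E : Type*} {ends : E → V × V} {o : E → V} (ho : IsOrient ends o) (e : E) :
    Inc ends e (o e) :=
  (ho e).imp Eq.symm Eq.symm

/-- The orientation which directs the edge `e` towards its second endpoint if `χ e` is `true`,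
and towards its first endpoint otherwise. -/
def orientation {V E : Type*} (ends : E → V × V) (χ : E → Bool) (e : E) : V :=
  bif χ e then (ends e).2 else (ends e).1

theorem isOrient_iff_exists_eq_orientation {V E : Type*} {ends : E → V × V} {o : E → V} :
    IsOrient ends o ↔ ∃ χ, o = orientation ends χ := by
  constructor
  · intro ho
    refine ⟨fun e => decide (o e = (ends e).2), funext fun e => ?_⟩
    rcases ho e with h | h <;> by_cases h' : o e = (ends e).2 <;> simp_all [orientation]
  · rintro ⟨χ, rfl⟩ e
    cases h : χ e <;> simp [orientation, h]

/-- A wiring of the switches `S` between input and output leaves indexed by `ι`. It maps each sink,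
an output leaf `inl i` or an in-port `inr (s, b)` of a switch, to the source which feeds it, an
input leaf `inl i` or an out-port `inr (s, b)`. There is one wire per source, named after it. -/
abbrev Wiring (ι S : Type*) : Type _ := Equiv.Perm (ι ⊕ S × Bool)

namespace Wiring

section Flow

variable {ι S : Type*} (w : Wiring ι S)

/-- The assignment `f` of signals to the wires is a flow: each switch emits as many signals as it
receives. -/
def IsFlow (f : ι ⊕ S × Bool → Bool) : Prop :=
  ∀ s, ∑ b, (f (w (.inr (s, b)))).toNat = ∑ b, (f (.inr (s, b))).toNat

variable {w}

theorem IsFlow.sum_output_eq_sum_input [Fintype ι] [Finite S] {f : ι ⊕ S × Bool → Bool}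
    (hf : w.IsFlow f) : ∑ i, (f (w (.inl i))).toNat = ∑ i, (f (.inl i)).toNat := by
  have := Fintype.ofFinite S
  have hsum : ∑ x, (f (w x)).toNat = ∑ x, (f x).toNat := Equiv.sum_comp w fun x => (f x).toNat
  have hswitch : ∑ s, ∑ b, (f (w (.inr (s, b)))).toNat = ∑ s, ∑ b, (f (.inr (s, b))).toNat :=
    Finset.sum_congr rfl fun s _ => hf s
  rw [Fintype.sum_sum_type, Fintype.sum_sum_type, Fintype.sum_prod_type, Fintype.sum_prod_type,
    hswitch] at hsum
  exact Nat.add_right_cancel hsum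

end Flow

section Network

/-- The vertices of the multigraph of a wiring. Those of the form `inl _` are the input leaves and
the exit vertices of the switches, those of the form `inr _` are the output leaves and the entry
vertices of the switches. -/
abbrev Vertex (ι S : Type*) : Type _ := (ι ⊕ S) ⊕ (ι ⊕ S)

/-- The edges of the multigraph of a wiring: the wires, and for each switch two parallel inner edges
between its exit vertex and its entry vertex. -/
abbrev Edge (ι S : Type*) : Type _ := (ι ⊕ S × Bool) ⊕ S × Bool

variable {ι S : Type*} (w : Wiring ι S)

/-- The endpoint of an edge among the input leaves and the exit vertices of switches. -/
def source : Edge ι S → ι ⊕ S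
  | .inl x => x.map id Prod.fst
  | .inr (s, _) => .inr s

/-- The endpoint of an edge among the output leaves and the entry vertices of switches. -/
def target : Edge ι S → ι ⊕ S
  | .inl x => (w.symm x).map id Prod.fst
  | .inr (s, _) => .inr s

/-- The incidence map of the multigraph of a wiring. The second endpoint of a wire is the one its
signal travels to, whereas the second endpoint of an inner edge is the entry of its switch. Thus at
both vertices of a switch it is the inner edges labelled `true` that balance the signals on the
wires. -/
def ends (e : Edge ι S) : Vertex ι S × Vertex ι S := (.inl (source e), .inr (w.target e))

/-- The two vertices of a switch `s`: the exit `inl s` and the entry `inr s`. -/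
def switchVertex : S ⊕ S → Vertex ι S := Sum.map .inr .inr

/-- The two wires at a vertex of a switch. -/
def wirePair : S ⊕ S → Bool → Edge ι S
  | .inl s, b => .inl (.inr (s, b))
  | .inr s, b => .inl (w (.inr (s, b)))

/-- The two inner edges at a vertex of a switch. -/
def innerPair (x : S ⊕ S) (b : Bool) : Edge ι S := .inr (x.elim id id, b)

/-- The two sets of edges which are conflict pairs at a vertex of a switch. -/
def conflictPairs (x : S ⊕ S) : Set (Set (Edge ι S)) :=
  {Set.range (w.wirePair x), Set.range (innerPair x)}

theorem switchVertex_injective : (switchVertex : S ⊕ S → Vertex ι S).Injective :=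
  Sum.inr_injective.sumMap Sum.inr_injective

variable {w}

theorem inc_inl_iff {e : Edge ι S} {x : ι ⊕ S} : Inc w.ends e (.inl x) ↔ source e = x := by
  simp [Inc, ends]

theorem inc_inr_iff {e : Edge ι S} {x : ι ⊕ S} : Inc w.ends e (.inr x) ↔ w.target e = x := by
  simp [Inc, ends]

theorem source_eq_inl_iff {e : Edge ι S} {i : ι} : source e = .inl i ↔ e = .inl (.inl i) := by
  rcases e with (j | p) | p <;> simp [source]

theorem target_eq_inl_iff {e : Edge ι S} {i : ι} :
    w.target e = .inl i ↔ e = .inl (w (.inl i)) := by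
  rcases e with x | p
  · obtain ⟨y, rfl⟩ := w.surjective x
    rcases y with j | p <;> simp [target]
  · simp [target]

theorem source_eq_inr_iff {e : Edge ι S} {s : S} :
    source e = .inr s ↔ ∃ b, e = .inl (.inr (s, b)) ∨ e = .inr (s, b) := by
  rcases e with (j | p) | p <;> simp [source, Prod.ext_iff]

theorem target_eq_inr_iff {e : Edge ι S} {s : S} :
    w.target e = .inr s ↔ ∃ b, e = .inl (w (.inr (s, b))) ∨ e = .inr (s, b) := by
  rcases e with x | p
  · obtain ⟨y, rfl⟩ := w.surjective x
    rcases y with j | p <;> simp [target, Prod.ext_iff]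
  · simp [target, Prod.ext_iff]

theorem inc_switchVertex_iff {e : Edge ι S} {x : S ⊕ S} : Inc w.ends e (switchVertex x) ↔
    e ∈ Set.range (w.wirePair x) ∪ Set.range (innerPair x) := by
  rcases x with s | s
  · rw [switchVertex, Sum.map_inl, inc_inl_iff, source_eq_inr_iff]
    simp only [exists_or, wirePair, innerPair, Set.mem_union, Set.mem_range, Sum.elim_inl, id,
      eq_comm]
  · rw [switchVertex, Sum.map_inr, inc_inr_iff, target_eq_inr_iff]
    simp only [exists_or, wirePair, innerPair, Set.mem_union, Set.mem_range, Sum.elim_inr, id,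
      eq_comm]

theorem wirePair_injective (x : S ⊕ S) : (w.wirePair x).Injective := by
  rcases x with s | s <;> intro b c h <;> simpa [wirePair] using h

theorem innerPair_injective (x : S ⊕ S) : (innerPair x : Bool → Edge ι S).Injective := by
  intro b c h
  simpa [innerPair] using h

theorem disjoint_range_wirePair_range_innerPair (x y : S ⊕ S) :
    Disjoint (Set.range (w.wirePair x)) (Set.range (innerPair y)) := by
  rw [Set.disjoint_range_iff]
  rcases x with s | s <;> simp [wirePair, innerPair]

theorem orientation_ends_eq_inl_iff {χ : Edge ι S → Bool} {e : Edge ι S} {x : ι ⊕ S} :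
    orientation w.ends χ e = .inl x ↔ source e = x ∧ χ e = false := by
  cases h : χ e <;> simp [orientation, ends, h]

theorem orientation_ends_eq_inr_iff {χ : Edge ι S → Bool} {e : Edge ι S} {x : ι ⊕ S} :
    orientation w.ends χ e = .inr x ↔ w.target e = x ∧ χ e = true := by
  cases h : χ e <;> simp [orientation, ends, h]

end Network

section ToSwitchNet

variable {k : ℕ} {S : Type} [Finite S] (w : Wiring (Fin k) S)

/-- The switching network of a wiring. -/
abbrev toSwitchNet : SwitchNet k where
  V := Vertex (Fin k) S
  E := Edge (Fin k) S
  finV := inferInstance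
  finE := inferInstance
  ends := w.ends
  noloop _ := Sum.inl_ne_inr
  a i := .inl (.inl i)
  b i := .inr (.inl i)
  ain i := .inl (.inl i)
  bout i := .inl (w (.inl i))
  leaves_inj := by rintro (i | i) (j | j) h <;> simp_all
  ain_inc i := by rw [inc_inl_iff, source_eq_inl_iff]
  a_deg i := by simp only [inc_inl_iff, source_eq_inl_iff, Nat.card_unique]
  bout_inc i := by rw [inc_inr_iff, target_eq_inl_iff]
  b_deg i := by simp only [inc_inr_iff, target_eq_inl_iff, Nat.card_unique]
  conf := {c | ∃ x, c.1 ∈ w.conflictPairs x ∧ c.2 = switchVertex x}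
  conf_pairs := by
    rintro ⟨_, _⟩ ⟨x, rfl | rfl, rfl⟩
    · exact ⟨⟨_, _, (w.wirePair_injective x).ne Bool.false_ne_true, Bool.range_eq _⟩,
        fun e he => inc_switchVertex_iff.2 (.inl he)⟩
    · exact ⟨⟨_, _, (innerPair_injective x).ne Bool.false_ne_true, Bool.range_eq _⟩,
        fun e he => inc_switchVertex_iff.2 (.inr he)⟩
  conf_disj := by
    rintro ⟨C, _⟩ ⟨x, hC, rfl⟩ ⟨D, _⟩ ⟨y, hD, rfl⟩ hne hxy
    obtain rfl : x = y := switchVertex_injective hxy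
    have hCD : C ≠ D := by rintro rfl; exact hne rfl
    have hdisj := w.disjoint_range_wirePair_range_innerPair x x
    rcases hC with rfl | rfl <;> rcases hD with rfl | rfl
    exacts [absurd rfl hCD, hdisj, hdisj.symm, absurd rfl hCD]

theorem not_isLeaf_toSwitchNet_iff {v : Vertex (Fin k) S} :
    ¬ w.toSwitchNet.IsLeaf v ↔ v ∈ Set.range switchVertex := by
  rcases v with (i | s) | (i | s) <;> simp [SwitchNet.IsLeaf, toSwitchNet, switchVertex]

theorem natCard_not_isLeaf_toSwitchNet :
    Nat.card {v : w.toSwitchNet.V // ¬ w.toSwitchNet.IsLeaf v} = 2 * Nat.card S := by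
  rw [Nat.card_congr (Equiv.subtypeEquivRight fun _ => w.not_isLeaf_toSwitchNet_iff),
    Nat.card_congr (Equiv.ofInjective _ switchVertex_injective).symm, Nat.card_sum, two_mul]

variable {w}

theorem valid_iff_ncard_inter_eq {o : Edge (Fin k) S → Vertex (Fin k) S} :
    w.toSwitchNet.Valid o ↔ IsOrient w.ends o ∧ ∀ x,
      ({e | o e = switchVertex x} ∩ Set.range (w.wirePair x)).ncard =
        ({e | o e = switchVertex x} ∩ Set.range (innerPair x)).ncard := by
  refine and_congr_right fun ho => ?_
  have hlocal (x : S ⊕ S) : (Even (indeg o (switchVertex x)) ∧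
      {e | o e = switchVertex x} ≠ Set.range (w.wirePair x) ∧
        {e | o e = switchVertex x} ≠ Set.range (innerPair x)) ↔ _ :=
    even_ncard_and_ne_iff_ncard_inter_eq
      (by rw [Set.ncard_range_of_injective (wirePair_injective x),
        Nat.card_eq_fintype_card, Fintype.card_bool])
      (by rw [Set.ncard_range_of_injective (innerPair_injective x),
        Nat.card_eq_fintype_card, Fintype.card_bool])
      (disjoint_range_wirePair_range_innerPair x x)
      fun e he => inc_switchVertex_iff.1 (he ▸ ho.inc_s6 e)
  constructor
  · rintro ⟨heven, hconf⟩ x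
    exact (hlocal x).1 ⟨heven _ (w.not_isLeaf_toSwitchNet_iff.2 ⟨x, rfl⟩),
      hconf (_, _) ⟨x, .inl rfl, rfl⟩, hconf (_, _) ⟨x, .inr rfl, rfl⟩⟩
  · refine fun hbalanced => ⟨fun v hv => ?_, ?_⟩
    · obtain ⟨x, rfl⟩ := w.not_isLeaf_toSwitchNet_iff.1 hv
      exact ((hlocal x).2 (hbalanced x)).1
    · rintro ⟨_, _⟩ ⟨x, rfl | rfl, rfl⟩
      exacts [((hlocal x).2 (hbalanced x)).2.1, ((hlocal x).2 (hbalanced x)).2.2]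

theorem valid_orientation_iff {χ : Edge (Fin k) S → Bool} :
    w.toSwitchNet.Valid (orientation w.ends χ) ↔ ∀ s,
      ∑ b, (χ (.inl (.inr (s, b)))).toNat = ∑ b, (χ (.inr (s, b))).toNat ∧
      ∑ b, (χ (.inl (w (.inr (s, b))))).toNat = ∑ b, (χ (.inr (s, b))).toNat := by
  rw [valid_iff_ncard_inter_eq, and_iff_right (isOrient_iff_exists_eq_orientation.2 ⟨χ, rfl⟩),
    Sum.forall, ← forall_and]
  refine forall_congr' fun s => and_congr ?_ ?_
  · rw [ncard_inter_range_eq_sum_toNat (wirePair_injective _)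
        (f := fun b => !χ (.inl (.inr (s, b)))),
      ncard_inter_range_eq_sum_toNat (innerPair_injective _) (f := fun b => !χ (.inr (s, b))),
      sum_toNat_not_eq_iff]
    · simp [switchVertex, orientation_ends_eq_inl_iff, innerPair, source]
    · simp [switchVertex, orientation_ends_eq_inl_iff, wirePair, source]
  · rw [ncard_inter_range_eq_sum_toNat (wirePair_injective _)
        (f := fun b => χ (.inl (w (.inr (s, b))))),
      ncard_inter_range_eq_sum_toNat (innerPair_injective _) (f := fun b => χ (.inr (s, b)))]
    · simp [switchVertex, orientation_ends_eq_inr_iff, innerPair, target]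
    · simp [switchVertex, orientation_ends_eq_inr_iff, wirePair, target]

theorem rightIn_orientation_iff {χ : Edge (Fin k) S → Bool} {i : Fin k} :
    w.toSwitchNet.RightIn (orientation w.ends χ) i ↔ χ (.inl (.inl i)) = true := by
  cases h : χ (.inl (.inl i)) <;>
    simp [SwitchNet.RightIn, toSwitchNet, orientation, ends, source, h]

theorem rightOut_orientation_iff {χ : Edge (Fin k) S → Bool} {i : Fin k} :
    w.toSwitchNet.RightOut (orientation w.ends χ) i ↔ χ (.inl (w (.inl i))) = true := by
  cases h : χ (.inl (w (.inl i))) <;>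
    simp [SwitchNet.RightOut, toSwitchNet, orientation, ends, target, h]

theorem toSwitchNet_P1 : w.toSwitchNet.P1 := by
  intro o ho
  obtain ⟨χ, rfl⟩ : ∃ χ, o = orientation w.ends χ := isOrient_iff_exists_eq_orientation.1 ho.1
  have hflow : w.IsFlow (χ ∘ .inl) := fun s =>
    (valid_orientation_iff.1 ho s).2.trans (valid_orientation_iff.1 ho s).1.symm
  calc Nat.card {i // w.toSwitchNet.RightOut (orientation w.ends χ) i}
      = ∑ i, (χ (.inl (w (.inl i)))).toNat := by
        rw [← natCard_subtype_eq_sum_toNat]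
        exact Nat.card_congr (Equiv.subtypeEquivRight fun _ => rightOut_orientation_iff)
    _ = ∑ i, (χ (.inl (.inl i))).toNat := hflow.sum_output_eq_sum_input
    _ = Nat.card {i // w.toSwitchNet.RightIn (orientation w.ends χ) i} := by
        rw [← natCard_subtype_eq_sum_toNat]
        exact Nat.card_congr (Equiv.subtypeEquivRight fun _ => rightIn_orientation_iff.symm)

theorem IsFlow.valid_orientation {f : Fin k ⊕ S × Bool → Bool} (hf : w.IsFlow f) :
    w.toSwitchNet.Valid (orientation w.ends (Sum.elim f (f ∘ .inr))) :=
  valid_orientation_iff.2 fun s => ⟨rfl, hf s⟩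

end ToSwitchNet

end Wiring

section Comparator

variable {ι α : Type*} [DecidableEq ι] [Lattice α]

/-- The comparator which moves the join of lines `i` and `j` to line `i` and their meet to line `j`.
It does nothing if `i = j`. -/
def comparator (i j : ι) (s : ι → α) : ι → α :=
  Function.update (Function.update s i (s i ⊔ s j)) j (s i ⊓ s j)

variable {i j l : ι} (s : ι → α)

theorem comparator_apply_right : comparator i j s j = s i ⊓ s j := Function.update_self ..

theorem comparator_apply_left : comparator i j s i = s i ⊔ s j := by
  obtain rfl | hij := eq_or_ne i j
  · rw [comparator_apply_right, inf_idem, sup_idem]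
  · rw [comparator, Function.update_of_ne hij, Function.update_self]

theorem comparator_apply_of_ne (hi : l ≠ i) (hj : l ≠ j) : comparator i j s l = s l := by
  rw [comparator, Function.update_of_ne hj, Function.update_of_ne hi]

theorem comparator_apply_le (hi : l ≠ i) : comparator i j s l ≤ s l := by
  by_cases hj : l = j
  · rw [hj, comparator_apply_right]
    exact inf_le_right
  · exact (comparator_apply_of_ne s hi hj).le

theorem le_of_le_comparator {a : α} (h : ∀ m, a ≤ comparator i j s m) (m : ι) : a ≤ s m := by
  have hinf : a ≤ s i ⊓ s j := comparator_apply_right s ▸ h j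
  by_cases hi : m = i
  · exact hi ▸ hinf.trans inf_le_left
  by_cases hj : m = j
  · exact hj ▸ hinf.trans inf_le_right
  exact comparator_apply_of_ne s hi hj ▸ h m

/-- The effect of a comparator network, given as the list of its comparators in order of
application. -/
def runComparators (net : List (ι × ι)) (s : ι → α) : ι → α :=
  net.foldl (fun t p => comparator p.1 p.2 t) s

theorem runComparators_append (net net' : List (ι × ι)) :
    runComparators (net ++ net') s = runComparators net' (runComparators net s) :=
  List.foldl_append

theorem le_of_le_runComparators {net : List (ι × ι)} {a : α}
    (h : ∀ m, a ≤ runComparators net s m) : ∀ m, a ≤ s m := by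
  induction net generalizing s with
  | nil => exact h
  | cons p net ih => exact le_of_le_comparator s (ih _ h)

theorem le_runComparators_map_left (js : List ι) :
    ∀ m ∈ i :: js, s m ≤ runComparators (js.map (i, ·)) s i := by
  induction js generalizing s with
  | nil => simp [runComparators]
  | cons j js ih =>
    have ih := ih (comparator i j s)
    have hsup : s i ⊔ s j ≤ runComparators (js.map (i, ·)) (comparator i j s) i :=
      comparator_apply_left s ▸ ih i List.mem_cons_self
    intro m hm
    by_cases hmi : m = i
    · rw [hmi]
      exact le_sup_left.trans hsup
    by_cases hmj : m = j
    · rw [hmj]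
      exact le_sup_right.trans hsup
    · exact comparator_apply_of_ne s hmi hmj ▸ ih m (by simp_all)

theorem runComparators_map_left_apply_le (js : List ι) (hl : l ≠ i) :
    runComparators (js.map (i, ·)) s l ≤ s l := by
  induction js generalizing s with
  | nil => exact le_rfl
  | cons j js ih => exact (ih _).trans (comparator_apply_le s hl)

theorem runComparators_map_right_le (js : List ι) :
    ∀ m ∈ i :: js, runComparators (js.map (·, i)) s i ≤ s m := by
  induction js generalizing s with
  | nil => simp [runComparators]
  | cons j js ih =>
    have ih := ih (comparator j i s)
    have hinf : runComparators (js.map (·, i)) (comparator j i s) i ≤ s j ⊓ s i :=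
      comparator_apply_right s ▸ ih i List.mem_cons_self
    intro m hm
    by_cases hmi : m = i
    · rw [hmi]
      exact hinf.trans inf_le_right
    by_cases hmj : m = j
    · rw [hmj]
      exact hinf.trans inf_le_left
    · exact comparator_apply_of_ne s hmj hmi ▸ ih m (by simp_all)

theorem runComparators_apply_of_notMem {net : List (ι × ι)} (h : ∀ p ∈ net, l ≠ p.1 ∧ l ≠ p.2) :
    runComparators net s l = s l := by
  induction net generalizing s with
  | nil => rfl
  | cons p net ih =>
    obtain ⟨hp, hnet⟩ := List.forall_mem_cons.1 h
    exact (ih _ hnet).trans (comparator_apply_of_ne s hp.1 hp.2)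

end Comparator

namespace Wiring

section AddSwitch

variable {ι S : Type*} {i j : ι}

/-- The inclusion of the sources of a wiring into those of its extension by a new switch, named
`none`; the sinks are included in the same way. -/
def oldWire (ι S : Type*) : ι ⊕ S × Bool ↪ ι ⊕ Option S × Bool :=
  .sumMap (.refl ι) (.prodMap .some (.refl Bool))

/-- The extension of a wiring by a new switch, named `none`, just before the output leaves `i` and
`j`: its ports `true` lie on the line to `i`, its ports `false` on the line to `j`. -/
def addSwitch (w : Wiring ι S) (i j : ι) : Wiring ι (Option S) :=
  w.viaEmbedding (oldWire ι S) * Equiv.swap (.inl i) (.inr (none, true)) *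
    Equiv.swap (.inl j) (.inr (none, false))

variable (w : Wiring ι S)

theorem viaEmbedding_oldWire_new (b : Bool) :
    w.viaEmbedding (oldWire ι S) (.inr (none, b)) = .inr (none, b) :=
  Equiv.Perm.viaEmbedding_apply_of_notMem _ _ _ (by simp [oldWire])

theorem addSwitch_switch (s : S) (b : Bool) :
    w.addSwitch i j (.inr (some s, b)) = oldWire ι S (w (.inr (s, b))) := by
  rw [← Equiv.Perm.viaEmbedding_apply]
  simp [addSwitch, oldWire, Equiv.swap_apply_of_ne_of_ne]

theorem addSwitch_new_true :
    w.addSwitch i j (.inr (none, true)) = oldWire ι S (w (.inl i)) := by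
  rw [← Equiv.Perm.viaEmbedding_apply]
  simp [addSwitch, oldWire, Equiv.swap_apply_of_ne_of_ne]

theorem addSwitch_new_false (hij : i ≠ j) :
    w.addSwitch i j (.inr (none, false)) = oldWire ι S (w (.inl j)) := by
  rw [← Equiv.Perm.viaEmbedding_apply]
  simp [addSwitch, oldWire, Equiv.swap_apply_of_ne_of_ne, hij.symm]

theorem addSwitch_left (hij : i ≠ j) : w.addSwitch i j (.inl i) = .inr (none, true) := by
  simp [addSwitch, viaEmbedding_oldWire_new, Equiv.swap_apply_of_ne_of_ne, hij]

theorem addSwitch_right : w.addSwitch i j (.inl j) = .inr (none, false) := by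
  simp [addSwitch, viaEmbedding_oldWire_new, Equiv.swap_apply_of_ne_of_ne]

theorem addSwitch_of_ne {l : ι} (hi : l ≠ i) (hj : l ≠ j) :
    w.addSwitch i j (.inl l) = oldWire ι S (w (.inl l)) := by
  rw [← Equiv.Perm.viaEmbedding_apply]
  simp [addSwitch, oldWire, Equiv.swap_apply_of_ne_of_ne, hi, hj]

end AddSwitch

section Realizes

variable {ι S : Type*} {i j : ι}

/-- The extension of an assignment of signals to the wires by the signals `g` at the out-ports of a
new switch. -/
def extendFlow (f : ι ⊕ S × Bool → Bool) (g : Bool → Bool) : ι ⊕ Option S × Bool → Bool :=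
  Sum.elim (f ∘ .inl) fun p => p.1.elim (g p.2) fun s => f (.inr (s, p.2))

theorem extendFlow_oldWire (f : ι ⊕ S × Bool → Bool) (g : Bool → Bool) (x : ι ⊕ S × Bool) :
    extendFlow f g (oldWire ι S x) = f x := by
  rcases x with l | ⟨s, b⟩ <;> rfl

/-- Every input `s` is carried to the output `T s` by some flow. Other flows with the same input may
have other outputs. -/
def Realizes (w : Wiring ι S) (T : (ι → Bool) → ι → Bool) : Prop :=
  ∀ s, ∃ f, w.IsFlow f ∧ (∀ i, f (.inl i) = s i) ∧ ∀ i, f (w (.inl i)) = T s i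

theorem realizes_refl : Realizes (Equiv.refl _ : Wiring ι Empty) id := fun s =>
  ⟨Sum.elim s fun p => p.1.elim, fun p => p.elim, fun _ => rfl, fun _ => rfl⟩

theorem toNat_sup_add_toNat_inf (a b : Bool) :
    (a ⊔ b).toNat + (a ⊓ b).toNat = a.toNat + b.toNat := by
  cases a <;> cases b <;> rfl

theorem Realizes.addSwitch [DecidableEq ι] {w : Wiring ι S} {T : (ι → Bool) → ι → Bool}
    (hw : w.Realizes T) (hij : i ≠ j) : (w.addSwitch i j).Realizes (comparator i j ∘ T) := by
  intro s
  obtain ⟨f, hf, hin, hout⟩ := hw s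
  refine ⟨extendFlow f fun b => bif b then T s i ⊔ T s j else T s i ⊓ T s j, ?_, hin, fun l => ?_⟩
  · rintro (_ | s')
    · simp only [Fintype.sum_bool, addSwitch_new_true, addSwitch_new_false w hij,
        extendFlow_oldWire, hout]
      exact (toNat_sup_add_toNat_inf (T s i) (T s j)).symm
    · simp only [addSwitch_switch, extendFlow_oldWire]
      exact hf s'
  · rw [Function.comp_apply]
    by_cases hi : l = i
    · rw [hi, addSwitch_left w hij, comparator_apply_left]
      rfl
    by_cases hj : l = j
    · rw [hj, addSwitch_right, comparator_apply_right]
      rfl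
    · rw [addSwitch_of_ne w hi hj, extendFlow_oldWire, hout, comparator_apply_of_ne _ hi hj]

theorem exists_realizes_runComparators [DecidableEq ι] (net : List (ι × ι))
    (hnet : ∀ p ∈ net, p.1 ≠ p.2) :
    ∃ (S : Type) (_ : Finite S) (w : Wiring ι S),
      Nat.card S = net.length ∧ w.Realizes (runComparators net) := by
  induction net using List.reverseRecOn with
  | nil => exact ⟨Empty, inferInstance, Equiv.refl _, Nat.card_of_isEmpty, realizes_refl⟩
  | append_singleton net p ih =>
    obtain ⟨S, _, w, hcard, hw⟩ := ih fun q hq => hnet q (List.mem_append_left _ hq)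
    refine ⟨Option S, inferInstance, w.addSwitch p.1 p.2, ?_, ?_⟩
    · rw [Finite.card_option, hcard, List.length_append, List.length_singleton]
    · convert hw.addSwitch (hnet p (by simp)) using 1
      exact funext fun s => runComparators_append s net [p]

end Realizes

end Wiring

theorem exists_switchNet_of_comparators {k : ℕ} (net : List (Fin k × Fin k))
    (hnet : ∀ p ∈ net, p.1 ≠ p.2) : ∃ N : SwitchNet k, N.P1 ∧
      Nat.card {x // ¬ N.IsLeaf x} = 2 * net.length ∧
      ∀ s, ∃ o, N.Valid o ∧ (∀ i, N.RightIn o i ↔ s i = true) ∧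
        ∀ i, N.RightOut o i ↔ runComparators net s i = true := by
  obtain ⟨S, _, w, hcard, hw⟩ := Wiring.exists_realizes_runComparators net hnet
  refine ⟨w.toSwitchNet, Wiring.toSwitchNet_P1, ?_, fun s => ?_⟩
  · rw [← hcard, Wiring.natCard_not_isLeaf_toSwitchNet]
  · obtain ⟨f, hf, hin, hout⟩ := hw s
    refine ⟨_, hf.valid_orientation, fun i => ?_, fun i => ?_⟩
    · rw [Wiring.rightIn_orientation_iff, ← hin i, Sum.elim_inl]
    · rw [Wiring.rightOut_orientation_iff, ← hout i, Sum.elim_inl]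

section Extraction

variable {m : ℕ}

/-- The comparator network which sweeps the join of all lines to line `0` and then the meet of the
other lines to line `1`. -/
def extractionNet (m : ℕ) : List (Fin (m + 2) × Fin (m + 2)) :=
  ({0}ᶜ : Finset _).toList.map (0, ·) ++ ({0, 1}ᶜ : Finset _).toList.map (·, 1)

theorem ne_of_mem_extractionNet : ∀ p ∈ extractionNet m, p.1 ≠ p.2 := by
  intro p hp
  rcases List.mem_append.1 hp with hp | hp <;> obtain ⟨j, hj, rfl⟩ := List.mem_map.1 hp
  · simpa [eq_comm] using hj
  · exact fun h => by simp_all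

theorem length_extractionNet : (extractionNet m).length = 2 * m + 1 := by
  rw [extractionNet, List.length_append, List.length_map, List.length_map, Finset.length_toList,
    Finset.length_toList, Finset.card_compl, Finset.card_compl, Finset.card_singleton,
    Finset.card_pair (by simp), Fintype.card_fin]
  lia

variable {α : Type*} [Lattice α] (s : Fin (m + 2) → α)

theorem le_runComparators_extractionNet_zero (i : Fin (m + 2)) :
    s i ≤ runComparators (extractionNet m) s 0 := by
  rw [extractionNet, runComparators_append, runComparators_apply_of_notMem]
  · exact le_runComparators_map_left s _ i (by simp [em])
  · simp +contextual [eq_comm]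

theorem runComparators_extractionNet_one_le (i : Fin (m + 2)) :
    runComparators (extractionNet m) s 1 ≤ s i := by
  rw [extractionNet, runComparators_append]
  set js := ({0}ᶜ : Finset (Fin (m + 2))).toList
  set t := runComparators (js.map (0, ·)) s
  set r := runComparators (({0, 1}ᶜ : Finset _).toList.map (·, 1)) t 1
  have hr_le (l) (hl : l ≠ 0) : r ≤ t l :=
    runComparators_map_right_le t _ l (by simp [hl, em])
  have hr_le_zero : r ≤ t 0 := calc
    r ≤ t 1 := hr_le 1 (by simp)
    _ ≤ s 1 := runComparators_map_left_apply_le s js (by simp)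
    _ ≤ t 0 := le_runComparators_map_left s js 1 (by simp [js])
  refine le_of_le_runComparators s (net := js.map (0, ·)) (fun l => ?_) i
  obtain rfl | hl := eq_or_ne l 0
  exacts [hr_le_zero, hr_le l hl]

end Extraction

/-- for every `k ≥ 2` there is a switching network `N_k` satisfying P0, P1
and P2, with at most `6k` non-leaf vertices. -/
theorem stmt_6 :
    ∀ k : ℕ, 2 ≤ k → ∃ N : SwitchNet k, N.P0 ∧ N.P1 ∧ N.P2 ∧
      Nat.card {x : N.V // ¬ N.IsLeaf x} ≤ 6 * k := by
  intro k hk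
  obtain ⟨m, rfl⟩ := Nat.exists_eq_add_of_le' hk
  obtain ⟨N, hP1, hcard, hrun⟩ :=
    exists_switchNet_of_comparators (extractionNet m) ne_of_mem_extractionNet
  refine ⟨N, fun s => ?_, hP1, fun s ⟨i, hi⟩ ⟨j, hj⟩ => ?_, ?_⟩
  · obtain ⟨o, ho, hin, -⟩ := hrun s
    exact ⟨o, ho, hin⟩
  · obtain ⟨o, ho, hin, hout⟩ := hrun s
    refine ⟨o, ho, hin, fun _ _ => ⟨(hout 0).2 ?_, (hout 1).not.2 ?_⟩⟩
    · exact eq_top_mono (le_runComparators_extractionNet_zero s i) hi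
    · exact Bool.eq_false_iff.1 (eq_bot_mono (runComparators_extractionNet_one_le s j) hj)
  · rw [hcard, length_extractionNet]
    lia
end
end
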